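/- Combining the cutoff decomposition with the strong Huygens principle: in odd dimension d ≥ 3, for α ≥ 1, the free wave group satisfies ‖⟨x⟩^{-α} e^{-itG₀} ⟨x⟩^{-α}‖_{𝓛(H¹⊕L²)} ≤ C⟨t⟩^{-α} uniformly in t ∈ ℝ. -/

import Mathlib

/-!
Green's identity pairs the solution at time `T` on a ball `|x| ≤ r`, tested against `h`, with the
wave `W` whose data are `(0, h)`, and moves the pairing to the initial data of the solution and the
values of `W` at time `-T`. By the strong Huygens principle `W` lives there in the shell
`||x| - |T|| ≤ r`, so for `r ≤ |T| / 2` it only meets data of size `O(⟨T⟩^{-α})`. Hence the solution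
is small on `|x| ≤ |T| / 8`, and outside that ball the weight itself decays. Hardy's inequality
recovers the power of `⟨T⟩` lost on the undifferentiated value.

The Huygens principle is obtained from one-dimensional waves: `r⁻¹∂ᵣ` maps radial waves in
dimension `n` to radial waves in dimension `n + 2`, and superpositions of translates of these
realise every velocity `h` up to a small uniform error.
-/

open MeasureTheory

/-- The Laplacian `Δf(x) = Σᵢ ∂²f/∂xᵢ²` on `ℝ^d`. -/
noncomputable def lapD (d : ℕ) (f : EuclideanSpace ℝ (Fin d) → ℂ)
    (x : EuclideanSpace ℝ (Fin d)) : ℂ :=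
  ∑ i : Fin d,
    fderiv ℝ (fun y => fderiv ℝ f y (EuclideanSpace.single i (1 : ℝ))) x
      (EuclideanSpace.single i (1 : ℝ))

open Filter Topology
open scoped ContDiff

namespace FreeWave

/-! ### Directional derivatives -/

section DirDeriv

variable {V G H : Type*} [NormedAddCommGroup V] [NormedSpace ℝ V]
  [NormedAddCommGroup G] [NormedSpace ℝ G] [NormedAddCommGroup H] [NormedSpace ℝ H]

/-- The directional derivative `∂ᵥF`. The direction comes first, so that iterated derivatives
`dirDeriv v (dirDeriv w F)` are again functions of the point. -/
noncomputable def dirDeriv (v : V) (F : V → G) (p : V) : G :=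
  fderiv ℝ F p v

lemma differentiable_of_smooth {F : V → G} (hF : ContDiff ℝ ∞ F) : Differentiable ℝ F :=
  hF.differentiable (by simp)

lemma contDiff_dirDeriv {F : V → G} (hF : ContDiff ℝ ∞ F) (v : V) :
    ContDiff ℝ ∞ (dirDeriv v F) :=
  (hF.fderiv_right (m := ∞) (by simp)).clm_apply contDiff_const

lemma continuous_dirDeriv {F : V → G} (hF : ContDiff ℝ ∞ F) (v : V) :
    Continuous (dirDeriv v F) :=
  (contDiff_dirDeriv hF v).continuous

lemma dirDeriv_comm {F : V → G} (hF : ContDiff ℝ ∞ F) (v w : V) :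
    dirDeriv v (dirDeriv w F) = dirDeriv w (dirDeriv v F) := by
  funext p
  have hsymm : IsSymmSndFDerivAt ℝ F p := hF.contDiffAt.isSymmSndFDerivAt (by
    rw [minSmoothness_of_isRCLikeNormedField]
    exact WithTop.coe_le_coe.2 le_top)
  have hF' : Differentiable ℝ (fderiv ℝ F) :=
    differentiable_of_smooth (hF.fderiv_right (m := ∞) (by simp))
  have key (a b : V) : dirDeriv a (dirDeriv b F) p = fderiv ℝ (fderiv ℝ F) p a b := by
    unfold dirDeriv
    rw [fderiv_clm_apply (hF' p) (differentiableAt_const _)]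
    simp
  rw [key, key]
  exact hsymm v w

lemma dirDeriv_const (v : V) (c : G) : dirDeriv v (fun _ => c) = fun _ => 0 := by
  funext p
  simp [dirDeriv]

lemma dirDeriv_add {F₁ F₂ : V → G} (h₁ : Differentiable ℝ F₁) (h₂ : Differentiable ℝ F₂) (v : V) :
    dirDeriv v (fun p => F₁ p + F₂ p) = fun p => dirDeriv v F₁ p + dirDeriv v F₂ p := by
  funext p
  simp [dirDeriv, fderiv_fun_add (h₁ p) (h₂ p)]

lemma dirDeriv_sub {F₁ F₂ : V → G} (h₁ : Differentiable ℝ F₁) (h₂ : Differentiable ℝ F₂) (v : V) :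
    dirDeriv v (fun p => F₁ p - F₂ p) = fun p => dirDeriv v F₁ p - dirDeriv v F₂ p := by
  funext p
  simp [dirDeriv, fderiv_fun_sub (h₁ p) (h₂ p)]

lemma dirDeriv_sum {ι : Type*} (s : Finset ι) {F : ι → V → G} (hF : ∀ i, Differentiable ℝ (F i))
    (v : V) :
    dirDeriv v (fun p => ∑ i ∈ s, F i p) = fun p => ∑ i ∈ s, dirDeriv v (F i) p := by
  funext p
  simp [dirDeriv, fderiv_fun_sum (fun i _ => hF i p)]

lemma dirDeriv_mul {F₁ F₂ : V → ℝ} (h₁ : Differentiable ℝ F₁) (h₂ : Differentiable ℝ F₂) (v : V) :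
    dirDeriv v (fun p => F₁ p * F₂ p) =
      fun p => dirDeriv v F₁ p * F₂ p + F₁ p * dirDeriv v F₂ p := by
  funext p
  simp only [dirDeriv, fderiv_fun_mul (h₁ p) (h₂ p), add_apply, smul_apply, smul_eq_mul]
  ring

lemma dirDeriv_const_mul {F : V → ℝ} (hF : Differentiable ℝ F) (c : ℝ) (v : V) :
    dirDeriv v (fun p => c * F p) = fun p => c * dirDeriv v F p := by
  funext p
  simp [dirDeriv, fderiv_const_mul (hF p)]

lemma dirDeriv_clm_comp {F : V → G} (hF : Differentiable ℝ F) (l : G →L[ℝ] H) (v : V) :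
    dirDeriv v (fun p => l (F p)) = fun p => l (dirDeriv v F p) := by
  funext p
  exact DFunLike.congr_fun (l.hasFDerivAt.comp p (hF p).hasFDerivAt).fderiv v

lemma dirDeriv_eq_zero_on {F : V → G} {O : Set V} (hO : IsOpen O) (h : ∀ p ∈ O, F p = 0) (v : V) :
    ∀ p ∈ O, dirDeriv v F p = 0 := by
  intro p hp
  have hzero : F =ᶠ[𝓝 p] fun _ => (0 : G) := by
    filter_upwards [hO.mem_nhds hp] with q hq using h q hq
  simp [dirDeriv, hzero.fderiv_eq]

lemma hasDerivAt_slice_left {F : ℝ × V → G} (hF : Differentiable ℝ F) (s : ℝ) (x : V) :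
    HasDerivAt (fun s => F (s, x)) (dirDeriv ((1 : ℝ), (0 : V)) F (s, x)) s :=
  (hF (s, x)).hasFDerivAt.comp_hasDerivAt s ((hasDerivAt_id s).prodMk (hasDerivAt_const s x))

lemma hasDerivAt_slice_right {F : V × ℝ → G} (hF : Differentiable ℝ F) (x : V) (s : ℝ) :
    HasDerivAt (fun s => F (x, s)) (dirDeriv ((0 : V), (1 : ℝ)) F (x, s)) s :=
  (hF (x, s)).hasFDerivAt.comp_hasDerivAt s ((hasDerivAt_const s x).prodMk (hasDerivAt_id s))

lemma dirDeriv_comp_sub (F : V → G) (v a : V) :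
    dirDeriv v (fun p => F (p - a)) = fun p => dirDeriv v F (p - a) := by
  funext p
  rw [dirDeriv, fderiv_comp_sub a, dirDeriv]

section Slice

variable {P : Type*} [NormedAddCommGroup P] [NormedSpace ℝ P] {F : P × V → G}

lemma dirDeriv_slice_left (hF : Differentiable ℝ F) (v : P) (x : V) :
    dirDeriv v (fun q => F (q, x)) = fun q => dirDeriv (v, (0 : V)) F (q, x) := by
  funext q
  have h : HasFDerivAt (fun q => F (q, x)) _ q :=
    (hF (q, x)).hasFDerivAt.comp q (hasFDerivAt_prodMk_left q x)
  exact (DFunLike.congr_fun h.fderiv v).trans (by simp [dirDeriv])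

lemma dirDeriv_slice_right (hF : Differentiable ℝ F) (q : P) (v : V) :
    dirDeriv v (fun x => F (q, x)) = fun x => dirDeriv ((0 : P), v) F (q, x) := by
  funext x
  have h : HasFDerivAt (fun x => F (q, x)) _ x :=
    (hF (q, x)).hasFDerivAt.comp x (hasFDerivAt_prodMk_right q x)
  exact (DFunLike.congr_fun h.fderiv v).trans (by simp [dirDeriv])

end Slice

/-- The induction behind smoothness statements for families defined by a formula: the family may
leave the original functions but must be stable under directional derivatives. -/
lemma contDiff_of_dirDeriv [FiniteDimensional ℝ V] (P : (V → G) → Prop)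
    (hP : ∀ F, P F → Differentiable ℝ F)
    (hP' : ∀ (n : ℕ) F, P F → (∀ F', P F' → ContDiff ℝ n F') → ∀ v, ContDiff ℝ n (dirDeriv v F))
    {F : V → G} (hF : P F) : ContDiff ℝ ∞ F := by
  have hn (n : ℕ) : ∀ F, P F → ContDiff ℝ n F := by
    induction n with
    | zero => exact fun F hF => contDiff_zero.2 (hP F hF).continuous
    | succ n ih =>
      intro F hF
      push_cast
      exact contDiff_succ_iff_fderiv_apply.2 ⟨hP F hF, by simp, fun v => hP' n F hF ih v⟩
  exact contDiff_infty.2 fun n => hn n F hF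

end DirDeriv

section ParametricIntegral

variable {P Y G : Type*} [NormedAddCommGroup P] [NormedSpace ℝ P]
  [NormedAddCommGroup Y] [NormedSpace ℝ Y] [NormedAddCommGroup G] [NormedSpace ℝ G]
  {F : P × Y → G}

lemma continuous_fderiv_comp_inl (hF : ContDiff ℝ ∞ F) :
    Continuous fun q : P × Y => (fderiv ℝ F q).comp (ContinuousLinearMap.inl ℝ P Y) := by
  have := hF.continuous_fderiv (by simp)
  fun_prop

variable [FiniteDimensional ℝ P] [FiniteDimensional ℝ Y] [MeasurableSpace Y] [BorelSpace Y]
  {μ : Measure Y} [IsFiniteMeasureOnCompacts μ] {S : Set Y}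

lemma hasFDerivAt_setIntegral (hS : IsCompact S) (hF : ContDiff ℝ ∞ F) (p₀ : P) :
    HasFDerivAt (fun p => ∫ y in S, F (p, y) ∂μ)
      (∫ y in S, (fderiv ℝ F (p₀, y)).comp (ContinuousLinearMap.inl ℝ P Y) ∂μ) p₀ := by
  have hslice (p : P) : Continuous fun y : Y => (p, y) := by fun_prop
  obtain ⟨C, hC⟩ := ((isCompact_closedBall p₀ 1).prod hS).exists_bound_of_continuousOn
    (continuous_fderiv_comp_inl hF).continuousOn
  have : IsFiniteMeasure (μ.restrict S) := ⟨by simpa using hS.measure_lt_top⟩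
  exact hasFDerivAt_integral_of_dominated_of_fderiv_le (𝕜 := ℝ) (bound := fun _ => C)
    (F' := fun p y => (fderiv ℝ F (p, y)).comp (ContinuousLinearMap.inl ℝ P Y))
    (Metric.closedBall_mem_nhds p₀ one_pos)
    (.of_forall fun p => (hF.continuous.comp (hslice p)).aestronglyMeasurable)
    ((hF.continuous.comp (hslice p₀)).continuousOn.integrableOn_compact hS)
    ((continuous_fderiv_comp_inl hF).comp (hslice p₀)).aestronglyMeasurable
    ((ae_restrict_mem hS.measurableSet).mono fun y hy p hp => hC (p, y) ⟨hp, hy⟩)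
    (integrable_const _)
    (.of_forall fun y p _ => (differentiable_of_smooth hF (p, y)).hasFDerivAt.comp p
      (hasFDerivAt_prodMk_left p y))

lemma dirDeriv_setIntegral (hS : IsCompact S) (hF : ContDiff ℝ ∞ F) (v : P) :
    dirDeriv v (fun p => ∫ y in S, F (p, y) ∂μ) =
      fun p => ∫ y in S, dirDeriv (v, (0 : Y)) F (p, y) ∂μ := by
  funext p
  have hcont : Continuous fun y : Y =>
      (fderiv ℝ F (p, y)).comp (ContinuousLinearMap.inl ℝ P Y) :=
    (continuous_fderiv_comp_inl hF).comp (by fun_prop)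
  rw [dirDeriv, (hasFDerivAt_setIntegral hS hF p).fderiv,
    ContinuousLinearMap.integral_apply (hcont.continuousOn.integrableOn_compact hS)]
  simp [dirDeriv]

lemma contDiff_setIntegral (hS : IsCompact S) (hF : ContDiff ℝ ∞ F) :
    ContDiff ℝ ∞ (fun p => ∫ y in S, F (p, y) ∂μ) := by
  refine contDiff_of_dirDeriv
    (fun I => ∃ F : P × Y → G, ContDiff ℝ ∞ F ∧ I = fun p => ∫ y in S, F (p, y) ∂μ)
    ?_ ?_ ⟨F, hF, rfl⟩
  · rintro I ⟨F, hF, rfl⟩ p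
    exact (hasFDerivAt_setIntegral hS hF p).differentiableAt
  · rintro n I ⟨F, hF, rfl⟩ ih v
    rw [dirDeriv_setIntegral hS hF v]
    exact ih _ ⟨_, contDiff_dirDeriv hF _, rfl⟩

end ParametricIntegral

/-! ### Radial waves in odd dimensions -/

local notation "∂ₜ" => dirDeriv ((1 : ℝ), 0)
local notation "∂ᵣ" => dirDeriv ((0 : ℝ), (1 : ℝ))

section RadialWave

variable {A B : ℝ × ℝ → ℝ} {τ r : ℝ}

/-- Smooth functions of time `τ` and signed radius `r` that are even in `r`, the profiles of smooth
radial functions. -/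
structure SmoothEven (A : ℝ × ℝ → ℝ) : Prop where
  smooth : ContDiff ℝ ∞ A
  even : ∀ τ r, A (τ, -r) = A (τ, r)

/-- The operator `r⁻¹∂ᵣ` on functions even in `r`, written as `∫₀¹ ∂ᵣ²A(τ, θr) dθ` so that it is
smooth across `r = 0`. -/
noncomputable def radialQuot (A : ℝ × ℝ → ℝ) (p : ℝ × ℝ) : ℝ :=
  ∫ θ in Set.Icc (0 : ℝ) 1, ∂ᵣ (∂ᵣ A) (p.1, θ * p.2)

lemma eq_of_eventually_eq_punctured {X : Type*} [TopologicalSpace X] [T2Space X] {f g : ℝ → X}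
    (hf : Continuous f) (hg : Continuous g) {r₀ : ℝ} (h : ∀ᶠ r in 𝓝[≠] r₀, f r = g r) :
    f r₀ = g r₀ :=
  tendsto_nhds_unique_of_eventuallyEq ((hf.tendsto r₀).mono_left nhdsWithin_le_nhds)
    ((hg.tendsto r₀).mono_left nhdsWithin_le_nhds) h

namespace SmoothEven

lemma differentiable (hA : SmoothEven A) : Differentiable ℝ A :=
  differentiable_of_smooth hA.smooth

lemma dirDeriv_time (hA : SmoothEven A) : SmoothEven (∂ₜ A) := by
  refine ⟨contDiff_dirDeriv hA.smooth _, fun τ r => ?_⟩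
  have h := hasDerivAt_slice_left hA.differentiable τ (-r)
  simp only [hA.even] at h
  exact h.unique (hasDerivAt_slice_left hA.differentiable τ r)

lemma dirDeriv_radius_neg (hA : SmoothEven A) (τ r : ℝ) : ∂ᵣ A (τ, -r) = -∂ᵣ A (τ, r) := by
  have h := (hasDerivAt_slice_right hA.differentiable τ (-r)).comp r (hasDerivAt_neg r)
  rw [show ((fun s => A (τ, s)) ∘ fun x => -x) = fun s => A (τ, s) by funext s; simp [hA.even]] at h
  linarith [h.unique (hasDerivAt_slice_right hA.differentiable τ r)]

end SmoothEven

lemma contDiff_radialQuot (hA : ContDiff ℝ ∞ A) : ContDiff ℝ ∞ (radialQuot A) := by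
  have h := contDiff_dirDeriv (contDiff_dirDeriv hA ((0 : ℝ), (1 : ℝ))) ((0 : ℝ), (1 : ℝ))
  exact contDiff_setIntegral isCompact_Icc
    (F := fun q : (ℝ × ℝ) × ℝ => ∂ᵣ (∂ᵣ A) (q.1.1, q.2 * q.1.2)) (h.comp (by fun_prop))

lemma mul_radialQuot (hA : SmoothEven A) (τ r : ℝ) : r * radialQuot A (τ, r) = ∂ᵣ A (τ, r) := by
  have hA' := contDiff_dirDeriv hA.smooth ((0 : ℝ), (1 : ℝ))
  have hzero : ∂ᵣ A (τ, 0) = 0 := by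
    have h := hA.dirDeriv_radius_neg τ 0
    rw [neg_zero] at h
    linarith
  have hderiv (θ : ℝ) : HasDerivAt (fun θ => ∂ᵣ A (τ, θ * r)) (r * ∂ᵣ (∂ᵣ A) (τ, θ * r)) θ := by
    have h := (hasDerivAt_slice_right (differentiable_of_smooth hA') τ (θ * r)).comp θ
      ((hasDerivAt_id θ).mul_const r)
    exact h.congr_deriv (by ring)
  have hcont : Continuous fun θ : ℝ => r * ∂ᵣ (∂ᵣ A) (τ, θ * r) := by
    have := continuous_dirDeriv hA' ((0 : ℝ), (1 : ℝ))
    fun_prop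
  have hftc := intervalIntegral.integral_eq_sub_of_hasDerivAt (a := 0) (b := 1)
    (fun θ _ => hderiv θ) (hcont.intervalIntegrable _ _)
  rw [intervalIntegral.integral_of_le zero_le_one, ← integral_Icc_eq_integral_Ioc,
    integral_const_mul, one_mul, zero_mul, hzero, sub_zero] at hftc
  exact hftc

lemma dirDeriv_radius_eq (hA : SmoothEven A) : ∂ᵣ A = fun p => p.2 * radialQuot A p :=
  funext fun p => (mul_radialQuot hA p.1 p.2).symm

lemma eq_radialQuot_of_mul_eq (hA : SmoothEven A) {f : ℝ → ℝ} (hf : Continuous f)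
    (h : ∀ r, r * f r = ∂ᵣ A (τ, r)) (r : ℝ) : f r = radialQuot A (τ, r) := by
  have hne (s : ℝ) (hs : s ≠ 0) : f s = radialQuot A (τ, s) :=
    mul_left_cancel₀ hs ((h s).trans (mul_radialQuot hA τ s).symm)
  rcases eq_or_ne r 0 with rfl | hr
  · refine eq_of_eventually_eq_punctured (g := fun s => radialQuot A (τ, s)) hf ?_
      (eventually_mem_nhdsWithin.mono hne)
    exact (contDiff_radialQuot hA.smooth).continuous.comp (by fun_prop)
  · exact hne r hr

lemma SmoothEven.radialQuot (hA : SmoothEven A) : SmoothEven (radialQuot A) := by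
  have hsmooth := contDiff_radialQuot hA.smooth
  refine ⟨hsmooth, fun τ r => ?_⟩
  refine eq_radialQuot_of_mul_eq hA (f := fun s => FreeWave.radialQuot A (τ, -s))
    (hsmooth.continuous.comp (by fun_prop)) (fun s => ?_) r
  linarith [mul_radialQuot hA τ (-s), hA.dirDeriv_radius_neg τ s]

lemma SmoothEven.iterate_radialQuot (hA : SmoothEven A) (k : ℕ) :
    SmoothEven (FreeWave.radialQuot^[k] A) :=
  Function.Iterate.rec SmoothEven hA (fun _ h => h.radialQuot) k

lemma dirDeriv_radius_mul (hB : Differentiable ℝ B) :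
    ∂ᵣ (fun p => p.2 * B p) = fun p => B p + p.2 * ∂ᵣ B p := by
  rw [dirDeriv_mul differentiable_snd hB]
  simp [dirDeriv, fderiv_snd]

lemma dirDeriv_radius_dirDeriv_radius (hA : SmoothEven A) :
    ∂ᵣ (∂ᵣ A) = fun p => radialQuot A p + p.2 * ∂ᵣ (radialQuot A) p := by
  rw [dirDeriv_radius_eq hA, dirDeriv_radius_mul hA.radialQuot.differentiable]

lemma radialQuot_dirDeriv_time (hA : SmoothEven A) :
    radialQuot (∂ₜ A) = ∂ₜ (radialQuot A) := by
  funext ⟨τ, r⟩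
  have hcont := continuous_dirDeriv hA.radialQuot.smooth ((1 : ℝ), (0 : ℝ))
  refine (eq_radialQuot_of_mul_eq hA.dirDeriv_time (f := fun r => ∂ₜ (radialQuot A) (τ, r))
    (hcont.comp (by fun_prop)) (fun r => ?_) r).symm
  rw [dirDeriv_comm hA.smooth, dirDeriv_radius_eq hA,
    dirDeriv_mul differentiable_snd hA.radialQuot.differentiable]
  simp [dirDeriv, fderiv_snd]

lemma iterate_radialQuot_dirDeriv_time (hA : SmoothEven A) (k : ℕ) :
    radialQuot^[k] (∂ₜ A) = ∂ₜ (radialQuot^[k] A) := by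
  induction k with
  | zero => rfl
  | succ k ih =>
    rw [Function.iterate_succ_apply', ih, Function.iterate_succ_apply',
      radialQuot_dirDeriv_time (hA.iterate_radialQuot k)]

lemma radialQuot_congr_slice (hA : SmoothEven A) (hB : SmoothEven B)
    (h : ∀ r, A (τ, r) = B (τ, r)) (r : ℝ) : radialQuot A (τ, r) = radialQuot B (τ, r) := by
  refine eq_radialQuot_of_mul_eq hB (f := fun r => radialQuot A (τ, r))
    (hA.radialQuot.smooth.continuous.comp (by fun_prop)) (fun r => ?_) r
  have hA' := hasDerivAt_slice_right hA.differentiable τ r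
  simp only [h] at hA'
  rw [mul_radialQuot hA]
  exact hA'.unique (hasDerivAt_slice_right hB.differentiable τ r)

lemma iterate_radialQuot_congr_slice (hA : SmoothEven A) (hB : SmoothEven B)
    (h : ∀ r, A (τ, r) = B (τ, r)) (k : ℕ) :
    ∀ r, (radialQuot^[k] A) (τ, r) = (radialQuot^[k] B) (τ, r) := by
  induction k with
  | zero => exact h
  | succ k ih =>
    simp only [Function.iterate_succ_apply']
    exact radialQuot_congr_slice (hA.iterate_radialQuot k) (hB.iterate_radialQuot k) ih

lemma iterate_radialQuot_zero (k : ℕ) : radialQuot^[k] (fun _ => 0) = fun _ => 0 := by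
  refine Function.iterate_fixed ?_ k
  funext p
  simp [radialQuot, dirDeriv_const]

lemma radialQuot_eq_zero_on (hA : SmoothEven A) {O : Set (ℝ × ℝ)} (hO : IsOpen O)
    (h : ∀ p ∈ O, ∂ᵣ A p = 0) : ∀ p ∈ O, radialQuot A p = 0 := by
  rintro ⟨τ, r⟩ hp
  have hne (s : ℝ) (hs : (τ, s) ∈ O) (hs₀ : s ≠ 0) : radialQuot A (τ, s) = 0 := by
    simpa [h _ hs, hs₀] using mul_radialQuot hA τ s
  rcases eq_or_ne r 0 with rfl | hr
  · have hmem : ∀ᶠ s in 𝓝 (0 : ℝ), (τ, s) ∈ O :=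
      (hO.preimage (by fun_prop : Continuous fun s : ℝ => (τ, s))).mem_nhds hp
    refine eq_of_eventually_eq_punctured (f := fun s => radialQuot A (τ, s))
      (hA.radialQuot.smooth.continuous.comp (by fun_prop)) continuous_const ?_
    filter_upwards [nhdsWithin_le_nhds hmem, eventually_mem_nhdsWithin] with s using hne s
  · exact hne r hp hr

lemma iterate_radialQuot_eq_zero_on (hA : SmoothEven A) {O : Set (ℝ × ℝ)} (hO : IsOpen O)
    (h : ∀ p ∈ O, ∂ᵣ A p = 0) (k : ℕ) : ∀ p ∈ O, (radialQuot^[k + 1] A) p = 0 := by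
  induction k with
  | zero => exact radialQuot_eq_zero_on hA hO h
  | succ k ih =>
    rw [Function.iterate_succ_apply']
    exact radialQuot_eq_zero_on (hA.iterate_radialQuot _) hO (dirDeriv_eq_zero_on hO ih _)

/-- The wave equation `∂ₜ²A = ∂ᵣ²A + (m - 1)r⁻¹∂ᵣA` of radial functions in dimension `m`, written
through `L = r⁻¹∂ᵣ`, for which `∂ᵣ²A = LA + r∂ᵣLA`. -/
def IsRadialWave (m : ℝ) (A : ℝ × ℝ → ℝ) : Prop :=
  ∀ p, ∂ₜ (∂ₜ A) p = p.2 * ∂ᵣ (radialQuot A) p + m * radialQuot A p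

lemma isRadialWave_one (hA : SmoothEven A) (h : ∂ₜ (∂ₜ A) = ∂ᵣ (∂ᵣ A)) : IsRadialWave 1 A := by
  intro p
  rw [h, dirDeriv_radius_dirDeriv_radius hA]
  ring

/-- Descent between dimensions: `r⁻¹∂ᵣ` raises the dimension by two, so that all odd dimensions are
reached from the one-dimensional wave equation. -/
lemma IsRadialWave.radialQuot {m : ℝ} (hA : SmoothEven A) (h : IsRadialWave m A) :
    IsRadialWave (m + 2) (radialQuot A) := by
  rintro ⟨τ, r⟩
  have hL := hA.radialQuot
  have hL' := contDiff_dirDeriv hL.smooth ((0 : ℝ), (1 : ℝ))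
  rw [← radialQuot_dirDeriv_time hA, ← radialQuot_dirDeriv_time hA.dirDeriv_time]
  refine (eq_radialQuot_of_mul_eq hA.dirDeriv_time.dirDeriv_time (f := fun r =>
    r * ∂ᵣ (FreeWave.radialQuot (FreeWave.radialQuot A)) (τ, r) +
      (m + 2) * FreeWave.radialQuot (FreeWave.radialQuot A) (τ, r)) ?_ (fun r => ?_) r).symm
  · have := hL.radialQuot.smooth.continuous
    have := continuous_dirDeriv hL.radialQuot.smooth ((0 : ℝ), (1 : ℝ))
    fun_prop
  · rw [show ∂ₜ (∂ₜ A) = _ from funext h,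
      dirDeriv_add (by have := differentiable_of_smooth hL'; fun_prop)
        (by have := hL.differentiable; fun_prop),
      dirDeriv_radius_mul (differentiable_of_smooth hL'), dirDeriv_const_mul hL.differentiable,
      dirDeriv_radius_dirDeriv_radius hL, dirDeriv_radius_eq hL]
    ring

lemma IsRadialWave.iterate_radialQuot {m : ℝ} (hA : SmoothEven A) (h : IsRadialWave m A) (k : ℕ) :
    IsRadialWave (2 * k + m) (FreeWave.radialQuot^[k] A) := by
  induction k with
  | zero => simpa using h
  | succ k ih =>
    rw [Function.iterate_succ_apply']
    convert ih.radialQuot (hA.iterate_radialQuot k) using 1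
    push_cast
    ring

end RadialWave

section RadialKernel

variable {g : ℝ → ℝ} {ε : ℝ}

/-- Smooth even functions of one variable supported in `[-ε, ε]`. -/
structure EvenSupportedIn (ε : ℝ) (g : ℝ → ℝ) : Prop where
  smooth : ContDiff ℝ ∞ g
  even : ∀ r, g (-r) = g r
  eq_zero : ∀ r, ε ≤ |r| → g r = 0

lemma EvenSupportedIn.smoothEven (hg : EvenSupportedIn ε g) : SmoothEven fun p => g p.2 :=
  ⟨hg.smooth.comp contDiff_snd, fun _ r => hg.even r⟩

lemma hasDerivAt_primitive (hg : Continuous g) (r : ℝ) :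
    HasDerivAt (fun r => ∫ s in (0 : ℝ)..r, g s) (g r) r :=
  (hg.integral_hasStrictDerivAt 0 r).hasDerivAt

lemma contDiff_primitive (hg : ContDiff ℝ ∞ g) : ContDiff ℝ ∞ fun r => ∫ s in (0 : ℝ)..r, g s := by
  have hderiv := hasDerivAt_primitive hg.continuous
  refine contDiff_infty_iff_deriv.2 ⟨fun r => (hderiv r).differentiableAt, ?_⟩
  rwa [show deriv (fun r => ∫ s in (0 : ℝ)..r, g s) = g from funext fun r => (hderiv r).deriv]

lemma primitive_neg (g : ℝ → ℝ) (r : ℝ) :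
    ∫ s in (0 : ℝ)..(-r), g s = -∫ s in (0 : ℝ)..r, g (-s) := by
  rw [intervalIntegral.integral_comp_neg, intervalIntegral.integral_symm, neg_zero]

/-- The preimage under `r⁻¹∂ᵣ` is `-∫ᵣ^∞ s g(s) ds`. -/
lemma EvenSupportedIn.exists_radialQuot_eq (hg : EvenSupportedIn ε g) :
    ∃ G, EvenSupportedIn ε G ∧ radialQuot (fun p => G p.2) = fun p => g p.2 := by
  have hsmooth : ContDiff ℝ ∞ fun s => s * g s := contDiff_id.mul hg.smooth
  have hint (a b : ℝ) : IntervalIntegrable (fun s => s * g s) volume a b :=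
    hsmooth.continuous.intervalIntegrable a b
  set G : ℝ → ℝ := fun r => (∫ s in (0 : ℝ)..r, s * g s) - ∫ s in (0 : ℝ)..ε, s * g s with hGdef
  have heven (r : ℝ) : G (-r) = G r := by simp [hGdef, primitive_neg, hg.even]
  have hzero (r : ℝ) (hr : ε ≤ r) : G r = 0 := by
    rw [hGdef]
    dsimp only
    rw [intervalIntegral.integral_interval_sub_left (hint 0 r) (hint 0 ε)]
    refine intervalIntegral.integral_zero_ae (.of_forall fun s hs => ?_)
    rw [Set.uIoc_of_le hr] at hs
    rw [hg.eq_zero s (hs.1.le.trans (le_abs_self s)), mul_zero]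
  have hG : EvenSupportedIn ε G := by
    refine ⟨(contDiff_primitive hsmooth).sub contDiff_const, heven, fun r hr => ?_⟩
    rcases abs_choice r with h | h <;> rw [h] at hr
    exacts [hzero r hr, heven r ▸ hzero (-r) hr]
  refine ⟨G, hG, funext fun ⟨τ, r⟩ => (eq_radialQuot_of_mul_eq (f := g) hG.smoothEven
    hg.smooth.continuous (fun r => ?_) r).symm⟩
  exact ((hasDerivAt_primitive hsmooth.continuous r).sub_const _).unique
    (hasDerivAt_slice_right hG.smoothEven.differentiable τ r)

lemma EvenSupportedIn.exists_iterate_radialQuot_eq (hg : EvenSupportedIn ε g) (k : ℕ) :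
    ∃ G, EvenSupportedIn ε G ∧ radialQuot^[k] (fun p => G p.2) = fun p => g p.2 := by
  induction k generalizing g with
  | zero => exact ⟨g, hg, rfl⟩
  | succ k ih =>
    obtain ⟨G₁, hG₁, h₁⟩ := hg.exists_radialQuot_eq
    obtain ⟨G, hG, h⟩ := ih hG₁
    exact ⟨G, hG, by rw [Function.iterate_succ_apply', h, h₁]⟩

/-- The superposition `(Φ(r + τ) + cΦ(r - τ))/2` of travelling waves in d'Alembert's formula. -/
noncomputable def travellingWave (c : ℝ) (Φ : ℝ → ℝ) (p : ℝ × ℝ) : ℝ :=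
  1 / 2 * (Φ (p.2 + p.1) + c * Φ (p.2 - p.1))

lemma contDiff_travellingWave {Φ : ℝ → ℝ} {n : ℕ∞ω} (hΦ : ContDiff ℝ n Φ) (c : ℝ) :
    ContDiff ℝ n (travellingWave c Φ) := by
  unfold travellingWave
  fun_prop

lemma differentiable_travellingWave {Φ φ : ℝ → ℝ} (hΦ : ∀ r, HasDerivAt Φ (φ r) r) (c : ℝ) :
    Differentiable ℝ (travellingWave c Φ) := by
  have hdiff : Differentiable ℝ Φ := fun r => (hΦ r).differentiableAt
  unfold travellingWave
  fun_prop

lemma dirDeriv_time_travellingWave {Φ φ : ℝ → ℝ} (hΦ : ∀ r, HasDerivAt Φ (φ r) r) (c : ℝ) :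
    ∂ₜ (travellingWave c Φ) = travellingWave (-c) φ := by
  funext ⟨τ, r⟩
  refine (hasDerivAt_slice_left (differentiable_travellingWave hΦ c) τ r).unique ?_
  have hplus := (hΦ (r + τ)).comp τ ((hasDerivAt_id τ).const_add r)
  have hminus := (hΦ (r - τ)).comp τ ((hasDerivAt_id τ).const_sub r)
  exact ((hplus.add (hminus.const_mul c)).const_mul (1 / 2)).congr_deriv
    (by simp only [travellingWave]; ring)

lemma dirDeriv_radius_travellingWave {Φ φ : ℝ → ℝ} (hΦ : ∀ r, HasDerivAt Φ (φ r) r) (c : ℝ) :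
    ∂ᵣ (travellingWave c Φ) = travellingWave c φ := by
  funext ⟨τ, r⟩
  refine (hasDerivAt_slice_right (differentiable_travellingWave hΦ c) τ r).unique ?_
  have hplus := (hΦ (r + τ)).comp r ((hasDerivAt_id r).add_const τ)
  have hminus := (hΦ (r - τ)).comp r ((hasDerivAt_id r).sub_const τ)
  exact ((hplus.add (hminus.const_mul c)).const_mul (1 / 2)).congr_deriv
    (by simp only [travellingWave]; ring)

lemma smoothEven_travellingWave_of_odd {H : ℝ → ℝ} (hH : ContDiff ℝ ∞ H)
    (hodd : ∀ r, H (-r) = -H r) : SmoothEven (travellingWave (-1) H) := by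
  refine ⟨contDiff_travellingWave hH _, fun τ r => ?_⟩
  simp only [travellingWave]
  rw [show -r + τ = -(r - τ) by ring, show -r - τ = -(r + τ) by ring, hodd, hodd]
  ring

lemma travellingWave_eq_zero {G : ℝ → ℝ} (hG : EvenSupportedIn ε G) (c : ℝ) {p : ℝ × ℝ}
    (hp : ε < |(|p.2| - |p.1|)|) : travellingWave c G p = 0 := by
  have hplus : ε ≤ |p.2 + p.1| := by
    have h := abs_abs_sub_abs_le_abs_sub p.2 (-p.1)
    rw [abs_neg, sub_neg_eq_add] at h
    exact hp.le.trans h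
  have hminus : ε ≤ |p.2 - p.1| := hp.le.trans (abs_abs_sub_abs_le_abs_sub p.2 p.1)
  simp [travellingWave, hG.eq_zero _ hplus, hG.eq_zero _ hminus]

/-- Take `r⁻¹∂ᵣ` of a one-dimensional wave with vanishing initial position. Inside the light cone
that wave is a constant, which the first `r⁻¹∂ᵣ` removes: this is the strong Huygens principle. -/
lemma exists_radialWave (k : ℕ) (hg : EvenSupportedIn ε g) :
    ∃ A : ℝ × ℝ → ℝ, SmoothEven A ∧ IsRadialWave (2 * (k + 1 : ℕ) + 1) A ∧
      (∀ r, A (0, r) = 0) ∧ (∀ r, ∂ₜ A (0, r) = g r) ∧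
      ∀ p, ε < |(|p.2| - |p.1|)| → A p = 0 := by
  obtain ⟨G, hG, hGg⟩ := hg.exists_iterate_radialQuot_eq (k + 1)
  set H : ℝ → ℝ := fun r => ∫ s in (0 : ℝ)..r, G s
  have hH : ∀ r, HasDerivAt H (G r) r := hasDerivAt_primitive hG.smooth.continuous
  have hG' (r : ℝ) : HasDerivAt G (deriv G r) r :=
    (differentiable_of_smooth hG.smooth r).hasDerivAt
  have hB : SmoothEven (travellingWave (-1) H) :=
    smoothEven_travellingWave_of_odd (contDiff_primitive hG.smooth)
      fun r => by simp [H, primitive_neg, hG.even]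
  have hwave : IsRadialWave 1 (travellingWave (-1) H) := isRadialWave_one hB (by
    rw [dirDeriv_time_travellingWave hH, dirDeriv_time_travellingWave hG',
      dirDeriv_radius_travellingWave hH, dirDeriv_radius_travellingWave hG', neg_neg])
  refine ⟨_, hB.iterate_radialQuot (k + 1), hwave.iterate_radialQuot hB (k + 1),
    fun r => ?_, fun r => ?_, ?_⟩
  · rw [iterate_radialQuot_congr_slice hB (B := fun _ => 0) ⟨contDiff_const, fun _ _ => rfl⟩
      (fun r => by simp [travellingWave]), iterate_radialQuot_zero]
  · rw [← iterate_radialQuot_dirDeriv_time hB, iterate_radialQuot_congr_slice hB.dirDeriv_time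
      hG.smoothEven (fun r => ?_), hGg]
    rw [dirDeriv_time_travellingWave hH]
    simp only [travellingWave, add_zero, sub_zero]
    ring
  · refine iterate_radialQuot_eq_zero_on hB (O := {p | ε < |(|p.2| - |p.1|)|})
      (isOpen_lt (by fun_prop) (by fun_prop)) (fun p hp => ?_) k
    rw [dirDeriv_radius_travellingWave hH]
    exact travellingWave_eq_zero hG (-1) hp

end RadialKernel

/-! ### Huygens waves on Euclidean space -/

/-- Euclidean `d`-space. -/
abbrev Space (d : ℕ) := EuclideanSpace ℝ (Fin d)

local notation "∂ₓ[" i "]" => dirDeriv ((0 : ℝ), EuclideanSpace.single i (1 : ℝ))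

section RadialLift

variable {X : Type*} [NormedAddCommGroup X] [InnerProductSpace ℝ X] {A : ℝ × ℝ → ℝ}

/-- The radial function on space-time with profile `A`. -/
noncomputable def radialLift (X : Type*) [Norm X] (A : ℝ × ℝ → ℝ) (p : ℝ × X) : ℝ :=
  A (p.1, ‖p.2‖)

lemma fderiv_apply_prod {G : Type*} [NormedAddCommGroup G] [NormedSpace ℝ G] (F : ℝ × ℝ → G)
    (p q : ℝ × ℝ) : fderiv ℝ F p q = q.1 • ∂ₜ F p + q.2 • ∂ᵣ F p := by
  rw [dirDeriv, dirDeriv, ← map_smul, ← map_smul, ← map_add]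
  simp

lemma hasFDerivAt_norm_of_ne_zero {x : X} (hx : x ≠ 0) :
    HasFDerivAt (fun y : X => ‖y‖) (‖x‖⁻¹ • innerSL ℝ x) x := by
  have h := (hasStrictFDerivAt_norm_sq x).hasFDerivAt.sqrt (by positivity)
  simp only [Real.sqrt_sq (norm_nonneg _)] at h
  refine h.congr_fderiv (ContinuousLinearMap.ext fun v => ?_)
  have hx₀ : ‖x‖ ≠ 0 := norm_ne_zero_iff.2 hx
  simp only [one_div, mul_inv_rev, smul_apply, coe_innerSL_apply, nsmul_eq_mul, Nat.cast_ofNat,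
    smul_eq_mul]
  field_simp

lemma hasFDerivAt_radialLift_zero (hA : SmoothEven A) (τ : ℝ) :
    HasFDerivAt (radialLift X A) (∂ₜ A (τ, 0) • ContinuousLinearMap.fst ℝ ℝ X) (τ, 0) := by
  have hA₀ := (hA.differentiable (τ, ‖(0 : X)‖)).hasFDerivAt
  have hpolar : Continuous fun q : ℝ × X => (q.1, ‖q.2‖) := by fun_prop
  have hr : ∂ᵣ A (τ, 0) = 0 := by simpa using (mul_radialQuot hA τ 0).symm
  rw [hasFDerivAt_iff_isLittleO] at hA₀ ⊢
  have hO : ((fun q : ℝ × ℝ => q - (τ, ‖(0 : X)‖)) ∘ fun q : ℝ × X => (q.1, ‖q.2‖))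
      =O[𝓝 (τ, 0)] fun q : ℝ × X => q - (τ, 0) :=
    .of_bound 1 (.of_forall fun q => by simp [Prod.norm_def])
  refine ((hA₀.comp_tendsto (hpolar.tendsto (τ, (0 : X)))).trans_isBigO hO).congr_left fun q => ?_
  simp [radialLift, fderiv_apply_prod, hr, mul_comm]

lemma hasFDerivAt_radialLift (hA : SmoothEven A) (p : ℝ × X) :
    HasFDerivAt (radialLift X A) (radialLift X (∂ₜ A) p • ContinuousLinearMap.fst ℝ ℝ X +
      radialLift X (radialQuot A) p • (innerSL ℝ p.2).comp (ContinuousLinearMap.snd ℝ ℝ X)) p := by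
  obtain ⟨τ, x⟩ := p
  rcases eq_or_ne x 0 with rfl | hx
  · simpa [radialLift] using hasFDerivAt_radialLift_zero hA τ
  · have hnorm : HasFDerivAt (fun q : ℝ × X => ‖q.2‖)
        ((‖x‖⁻¹ • innerSL ℝ x).comp (ContinuousLinearMap.snd ℝ ℝ X)) (τ, x) :=
      (hasFDerivAt_norm_of_ne_zero hx).comp (τ, x) hasFDerivAt_snd
    have hcomp := (hA.differentiable (τ, ‖x‖)).hasFDerivAt.comp (τ, x)
      ((hasFDerivAt_fst (p := (τ, x))).prodMk hnorm)
    refine HasFDerivAt.congr_fderiv (f := radialLift X A) hcomp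
      (ContinuousLinearMap.ext fun q => ?_)
    have hx₀ : ‖x‖ ≠ 0 := norm_ne_zero_iff.2 hx
    simp only [ContinuousLinearMap.comp_apply, ContinuousLinearMap.prod_apply, fderiv_apply_prod,
      ← mul_radialQuot hA, ContinuousLinearMap.coe_fst', ContinuousLinearMap.coe_snd', smul_apply,
      add_apply, coe_innerSL_apply, radialLift, smul_eq_mul]
    field_simp

lemma dirDeriv_radialLift (hA : SmoothEven A) (v : ℝ × X) :
    dirDeriv v (radialLift X A) = fun p =>
      radialLift X (∂ₜ A) p * v.1 + radialLift X (radialQuot A) p * inner ℝ p.2 v.2 := by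
  funext p
  simp [dirDeriv, (hasFDerivAt_radialLift hA p).fderiv]

lemma dirDeriv_time_radialLift (hA : SmoothEven A) :
    ∂ₜ (radialLift X A) = radialLift X (∂ₜ A) := by
  simp [dirDeriv_radialLift hA]

lemma contDiff_radialLift [FiniteDimensional ℝ X] (hA : SmoothEven A) :
    ContDiff ℝ ∞ (radialLift X A) := by
  refine contDiff_of_dirDeriv (fun F => ∃ A, SmoothEven A ∧ F = radialLift X A) ?_ ?_ ⟨A, hA, rfl⟩
  · rintro F ⟨A, hA, rfl⟩ p
    exact (hasFDerivAt_radialLift hA p).differentiableAt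
  · rintro n F ⟨A, hA, rfl⟩ ih v
    have htime := ih _ ⟨_, hA.dirDeriv_time, rfl⟩
    have hradius := ih _ ⟨_, hA.radialQuot, rfl⟩
    rw [dirDeriv_radialLift hA]
    exact (htime.mul contDiff_const).add (hradius.mul (contDiff_snd.inner ℝ contDiff_const))

end RadialLift

section Wave

variable {d : ℕ} {G H : Type*} [NormedAddCommGroup G] [NormedSpace ℝ G]
  [NormedAddCommGroup H] [NormedSpace ℝ H]

/-- The free wave equation `∂ₜ²U = ΔU`. -/
def IsWave (U : ℝ × Space d → G) : Prop :=
  ∀ p, ∂ₜ (∂ₜ U) p = ∑ i, ∂ₓ[i] (∂ₓ[i] U) p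

lemma IsWave.dirDeriv {U : ℝ × Space d → G} (hU : ContDiff ℝ ∞ U) (h : IsWave U)
    (v : ℝ × Space d) : IsWave (dirDeriv v U) := by
  intro p
  have hcomm (w : ℝ × Space d) : FreeWave.dirDeriv w (FreeWave.dirDeriv w (FreeWave.dirDeriv v U)) =
      FreeWave.dirDeriv v (FreeWave.dirDeriv w (FreeWave.dirDeriv w U)) := by
    rw [dirDeriv_comm hU w v, dirDeriv_comm (contDiff_dirDeriv hU w) w v]
  simp only [hcomm]
  rw [show ∂ₜ (∂ₜ U) = _ from funext h, dirDeriv_sum _ fun i =>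
    differentiable_of_smooth (contDiff_dirDeriv (contDiff_dirDeriv hU _) _)]

lemma IsWave.comp_sub {U : ℝ × Space d → G} (h : IsWave U) (a : ℝ × Space d) :
    IsWave fun p => U (p - a) := by
  intro p
  simp only [dirDeriv_comp_sub]
  exact h _

lemma IsWave.clm_comp {U : ℝ × Space d → G} (hU : ContDiff ℝ ∞ U) (h : IsWave U) (l : G →L[ℝ] H) :
    IsWave fun p => l (U p) := by
  intro p
  simp only [dirDeriv_clm_comp (differentiable_of_smooth hU),
    dirDeriv_clm_comp (differentiable_of_smooth (contDiff_dirDeriv hU _)), h p, map_sum]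

lemma dirDeriv_space_coord (i : Fin d) :
    ∂ₓ[i] (fun p : ℝ × Space d => p.2 i) = fun _ => 1 := by
  funext p
  have h : HasFDerivAt (fun p : ℝ × Space d => p.2 i)
      ((EuclideanSpace.proj i : Space d →L[ℝ] ℝ).comp (ContinuousLinearMap.snd ℝ ℝ (Space d))) p :=
    ((EuclideanSpace.proj i).comp (ContinuousLinearMap.snd ℝ ℝ (Space d))).hasFDerivAt
  simp [dirDeriv, h.fderiv]

lemma dirDeriv_space_radialLift {A : ℝ × ℝ → ℝ} (hA : SmoothEven A) (i : Fin d) :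
    ∂ₓ[i] (radialLift (Space d) A) =
      fun p => radialLift (Space d) (radialQuot A) p * p.2 i := by
  simp [dirDeriv_radialLift hA, EuclideanSpace.inner_single_right]

lemma IsRadialWave.isWave_radialLift {A : ℝ × ℝ → ℝ} (hA : SmoothEven A) (h : IsRadialWave d A) :
    IsWave (radialLift (Space d) A) := by
  intro p
  have hspace (i : Fin d) : ∂ₓ[i] (∂ₓ[i] (radialLift (Space d) A)) p =
      radialLift _ (FreeWave.radialQuot (FreeWave.radialQuot A)) p * p.2 i ^ 2 +
        radialLift _ (FreeWave.radialQuot A) p := by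
    rw [dirDeriv_space_radialLift hA, dirDeriv_mul
      (differentiable_of_smooth (contDiff_radialLift hA.radialQuot)) (by fun_prop),
      dirDeriv_space_radialLift hA.radialQuot, dirDeriv_space_coord]
    ring
  have hnorm : ∑ i, p.2 i ^ 2 = ‖p.2‖ ^ 2 := by simp [EuclideanSpace.norm_sq_eq]
  simp only [hspace, dirDeriv_time_radialLift hA, dirDeriv_time_radialLift hA.dirDeriv_time]
  rw [Finset.sum_add_distrib, ← Finset.mul_sum, hnorm, radialLift, h,
    ← mul_radialQuot hA.radialQuot, Finset.sum_const, Finset.card_univ, Fintype.card_fin,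
    nsmul_eq_mul]
  simp only [radialLift]
  ring

end Wave

section HuygensWave

variable {d : ℕ} {R R' ρ ε : ℝ} {W K : ℝ × Space d → ℝ} {h : Space d → ℝ}

/-- Smooth waves with vanishing initial position that satisfy the strong Huygens principle: they
live within distance `R` of the light cone. -/
structure IsHuygensWave (R : ℝ) (W : ℝ × Space d → ℝ) : Prop where
  smooth : ContDiff ℝ ∞ W
  wave : IsWave W
  initial : ∀ x, W (0, x) = 0
  eq_zero : ∀ p, R < |(‖p.2‖ - |p.1|)| → W p = 0

lemma IsHuygensWave.mono (hW : IsHuygensWave R W) (h : R ≤ R') : IsHuygensWave R' W :=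
  ⟨hW.smooth, hW.wave, hW.initial, fun p hp => hW.eq_zero p (h.trans_lt hp)⟩

lemma IsHuygensWave.dirDeriv_eq_zero (hW : IsHuygensWave R W) (v : ℝ × Space d) {p : ℝ × Space d}
    (hp : R < |(‖p.2‖ - |p.1|)|) : dirDeriv v W p = 0 :=
  dirDeriv_eq_zero_on (O := {p : ℝ × Space d | R < |(‖p.2‖ - |p.1|)|})
    (isOpen_lt (by fun_prop) (by fun_prop)) hW.eq_zero v p hp

lemma exists_radial_density {X : Type*} [NormedAddCommGroup X] [NormedSpace ℝ X]
    [FiniteDimensional ℝ X] [MeasurableSpace X] [BorelSpace X] (μ : Measure X) [μ.IsAddHaarMeasure]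
    (hε : 0 < ε) :
    ∃ g, EvenSupportedIn ε g ∧ (∀ r, 0 ≤ g r) ∧ ∫ x, g ‖x‖ ∂μ = 1 := by
  let b : ContDiffBump (0 : ℝ) := ⟨ε / 2, ε, by positivity, by linarith⟩
  have hzero (r : ℝ) (hr : ε ≤ |r|) : b r = 0 := b.zero_of_le_dist (by simpa [b] using hr)
  have hone : b ‖(0 : X)‖ = 1 := b.one_of_mem_closedBall (by simpa [b] using (half_pos hε).le)
  have hcompact : HasCompactSupport fun x : X => b ‖x‖ := by
    refine .intro (isCompact_closedBall (0 : X) ε) fun x hx => hzero _ ?_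
    rw [mem_closedBall_zero_iff, not_le] at hx
    rw [abs_norm]
    exact hx.le
  have hpos : 0 < ∫ x : X, b ‖x‖ ∂μ :=
    (b.continuous.comp continuous_norm).integral_pos_of_hasCompactSupport_nonneg_nonzero hcompact
      (fun x => b.nonneg) (x := 0) (hone.trans_ne one_ne_zero)
  refine ⟨fun r => (∫ x : X, b ‖x‖ ∂μ)⁻¹ * b r, ⟨contDiff_const.mul b.contDiff,
    fun r => by rw [b.neg], fun r hr => by rw [hzero r hr, mul_zero]⟩,
    fun r => mul_nonneg (inv_nonneg.2 hpos.le) b.nonneg, ?_⟩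
  rw [integral_const_mul, inv_mul_cancel₀ hpos.ne']

lemma exists_huygens_kernel (hd : 3 ≤ d) (hodd : Odd d) (hε : 0 < ε) :
    ∃ K : ℝ × Space d → ℝ, IsHuygensWave ε K ∧ (∀ x, 0 ≤ ∂ₜ K (0, x)) ∧ ∫ x, ∂ₜ K (0, x) = 1 := by
  obtain ⟨k, rfl⟩ : ∃ k, d = 2 * (k + 1) + 1 := by
    obtain ⟨m, rfl⟩ := hodd
    exact ⟨m - 1, by omega⟩
  obtain ⟨g, hg, hg₀, hg₁⟩ := exists_radial_density (volume : Measure (Space (2 * (k + 1) + 1))) hε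
  obtain ⟨A, hA, hwave, hinit, hvel, hzero⟩ := exists_radialWave k hg
  have hvel' (x) : ∂ₜ (radialLift (Space (2 * (k + 1) + 1)) A) (0, x) = g ‖x‖ := by
    rw [dirDeriv_time_radialLift hA]
    exact hvel _
  refine ⟨radialLift _ A, ⟨contDiff_radialLift hA, ?_, fun x => hinit _, fun p hp => ?_⟩,
    fun x => hvel' x ▸ hg₀ _, by simpa only [hvel'] using hg₁⟩
  · exact IsRadialWave.isWave_radialLift hA (by exact_mod_cast hwave)
  · exact hzero _ (by rwa [abs_norm])

/-- The superposition of the spatial translates of `K` with density `h` on `S`. -/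
noncomputable def superpose (S : Set (Space d)) (h : Space d → ℝ) (K : ℝ × Space d → ℝ)
    (p : ℝ × Space d) : ℝ :=
  ∫ y in S, h y * K (p - (0, y))

lemma contDiff_superpose {S : Set (Space d)} (hS : IsCompact S) (hh : ContDiff ℝ ∞ h)
    (hK : ContDiff ℝ ∞ K) : ContDiff ℝ ∞ (superpose S h K) :=
  contDiff_setIntegral hS (F := fun q : (ℝ × Space d) × Space d => h q.2 * K (q.1 - (0, q.2)))
    (by fun_prop)

lemma dirDeriv_superpose {S : Set (Space d)} (hS : IsCompact S) (hh : ContDiff ℝ ∞ h)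
    (hK : ContDiff ℝ ∞ K) (v : ℝ × Space d) :
    dirDeriv v (superpose S h K) = superpose S h (dirDeriv v K) := by
  have hF : ContDiff ℝ ∞ fun q : (ℝ × Space d) × Space d => h q.2 * K (q.1 - (0, q.2)) := by
    fun_prop
  have hdiff := differentiable_of_smooth hK
  refine (dirDeriv_setIntegral hS hF v).trans (funext fun p => congrArg _ (funext fun y => ?_))
  refine (congrFun (dirDeriv_slice_left (differentiable_of_smooth hF) v y) p).symm.trans ?_
  change dirDeriv v (fun q => h y * K (q - (0, y))) p = h y * dirDeriv v K (p - (0, y))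
  rw [dirDeriv_const_mul (by fun_prop), dirDeriv_comp_sub]

lemma IsWave.superpose {S : Set (Space d)} (hS : IsCompact S) (hh : ContDiff ℝ ∞ h)
    (hK : ContDiff ℝ ∞ K) (hwave : IsWave K) : IsWave (superpose S h K) := by
  intro p
  simp only [dirDeriv_superpose hS hh hK, dirDeriv_superpose hS hh (contDiff_dirDeriv hK _)]
  simp only [FreeWave.superpose, hwave _, Finset.mul_sum]
  refine integral_finsetSum _ fun i _ =>
    (Continuous.continuousOn ?_).integrableOn_compact hS
  have := continuous_dirDeriv (contDiff_dirDeriv hK (0, EuclideanSpace.single i 1))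
    (0, EuclideanSpace.single i (1 : ℝ))
  have := hh.continuous
  fun_prop

lemma IsHuygensWave.superpose (hK : IsHuygensWave ε K) (hh : ContDiff ℝ ∞ h) (ρ : ℝ) :
    IsHuygensWave (ρ + ε) (superpose (Metric.closedBall 0 ρ) h K) where
  smooth := contDiff_superpose (isCompact_closedBall _ _) hh hK.smooth
  wave := hK.wave.superpose (isCompact_closedBall _ _) hh hK.smooth
  initial x := by simp [FreeWave.superpose, hK.initial]
  eq_zero p hp := by
    refine setIntegral_eq_zero_of_forall_eq_zero fun y hy => ?_
    rw [mem_closedBall_zero_iff] at hy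
    rw [hK.eq_zero _ ?_, mul_zero]
    have htri : |(‖p.2‖ - |p.1|)| ≤ |(‖p.2‖ - ‖p.2 - y‖)| + |(‖p.2 - y‖ - |p.1|)| :=
      abs_sub_le _ _ _
    have hnorm := abs_norm_sub_norm_le p.2 (p.2 - y)
    rw [sub_sub_cancel] at hnorm
    simp only [Prod.fst_sub, Prod.snd_sub, sub_zero]
    linarith

/-- Superposing kernels whose initial velocities form an approximate identity. -/
lemma exists_huygensWave (hd : 3 ≤ d) (hodd : Odd d) (hh : ContDiff ℝ ∞ h)
    (hsupp : ∀ x, ρ < ‖x‖ → h x = 0) (hε : 0 < ε) :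
    ∃ W : ℝ × Space d → ℝ, IsHuygensWave (ρ + ε) W ∧ ∀ x, |∂ₜ W (0, x) - h x| ≤ ε := by
  have hcompact : HasCompactSupport h :=
    .intro (isCompact_closedBall (0 : Space d) ρ) fun x hx => hsupp x (by simpa using hx)
  obtain ⟨δ, hδ, hhδ⟩ := Metric.uniformContinuous_iff.1
    (hcompact.uniformContinuous_of_continuous hh.continuous) ε hε
  obtain ⟨K, hK, hK₀, hK₁⟩ := exists_huygens_kernel hd hodd (ε := min (δ / 2) ε) (by positivity)
  refine ⟨_, (hK.superpose hh ρ).mono (by gcongr; exact min_le_right _ _), fun x => ?_⟩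
  have hconv : ∂ₜ (superpose (Metric.closedBall 0 ρ) h K) (0, x) =
      convolution (fun y => ∂ₜ K (0, y)) h (ContinuousLinearMap.lsmul ℝ ℝ) volume x := by
    rw [dirDeriv_superpose (isCompact_closedBall _ _) hh hK.smooth, superpose,
      setIntegral_eq_integral_of_forall_compl_eq_zero, convolution_lsmul_swap]
    · simp [mul_comm]
    · intro y hy
      rw [hsupp y (by simpa using hy), zero_mul]
  rw [hconv, ← Real.dist_eq]
  refine dist_convolution_le hε.le (R := δ) (fun y hy => ?_) hK₀ hK₁
    hh.continuous.aestronglyMeasurable fun y hy => (hhδ hy).le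
  by_contra hy'
  refine hy (hK.dirDeriv_eq_zero _ ?_)
  rw [mem_ball_zero_iff, not_lt] at hy'
  simp only [abs_zero, sub_zero, abs_norm]
  linarith [min_le_left (δ / 2) ε]

end HuygensWave

/-! ### Weights and Hardy's inequality -/

/-- The weight `⟨t⟩^{-α}`; the weight `⟨x⟩^{-α}` on a normed space is `weight α ‖x‖`. -/
noncomputable def weight (α t : ℝ) : ℝ := (1 + t ^ 2) ^ (-α / 2)

section Weight

variable {α β s t : ℝ}

lemma weight_pos (α t : ℝ) : 0 < weight α t := by
  unfold weight
  positivity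

lemma weight_zero_right (α : ℝ) : weight α 0 = 1 := by
  simp [weight]

lemma weight_add (α β t : ℝ) : weight (α + β) t = weight α t * weight β t := by
  rw [weight, weight, weight, ← Real.rpow_add (by positivity)]
  ring_nf

lemma weight_two (t : ℝ) : weight 2 t = (1 + t ^ 2)⁻¹ := by
  rw [weight, show (-2 / 2 : ℝ) = -1 by norm_num, Real.rpow_neg_one]

lemma weight_one_sq (t : ℝ) : weight 1 t ^ 2 = weight 2 t := by
  rw [sq, ← weight_add, one_add_one_eq_two]

lemma weight_sub_one_le (α t : ℝ) : weight (α - 1) t ≤ (1 + |t|) * weight α t := by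
  have hroot : weight (-1) t ≤ 1 + |t| := by
    rw [weight, neg_neg, ← Real.sqrt_eq_rpow, Real.sqrt_le_left (by positivity)]
    nlinarith [sq_abs t, abs_nonneg t]
  rw [sub_eq_add_neg, weight_add, mul_comm]
  exact mul_le_mul_of_nonneg_right hroot (weight_pos α t).le

lemma sq_mul_weight_two_le (t : ℝ) : t ^ 2 * weight 2 t ≤ 1 := by
  rw [weight_two, ← div_eq_mul_inv, div_le_one (by positivity)]
  linarith

lemma weight_le_rpow_mul_weight {m : ℝ} (hα : 0 ≤ α) (hm : 0 < m)
    (h : 1 + t ^ 2 ≤ m ^ 2 * (1 + s ^ 2)) : weight α s ≤ m ^ α * weight α t := by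
  have hpow : m ^ α = (m ^ 2) ^ (α / 2) := by
    rw [← Real.rpow_natCast, ← Real.rpow_mul hm.le]
    ring_nf
  rw [weight, weight, neg_div, Real.rpow_neg (by positivity), Real.rpow_neg (by positivity), hpow,
    ← div_eq_mul_inv, le_div_iff₀ (by positivity), inv_mul_le_iff₀ (by positivity),
    ← Real.mul_rpow (by positivity) (by positivity), mul_comm (1 + s ^ 2)]
  gcongr

lemma weight_le_weight (hα : 0 ≤ α) (h : |s| ≤ |t|) : weight α t ≤ weight α s := by
  have hsq := sq_le_sq.2 h
  simpa using weight_le_rpow_mul_weight hα one_pos (by linarith : 1 + s ^ 2 ≤ 1 ^ 2 * (1 + t ^ 2))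

lemma weight_le_one (hα : 0 ≤ α) (t : ℝ) : weight α t ≤ 1 := by
  simpa [weight_zero_right] using weight_le_weight (s := 0) (t := t) hα (by simp)

lemma weight_le_weight_of_le (h : β ≤ α) (t : ℝ) : weight α t ≤ weight β t := by
  rw [← sub_add_cancel α β, weight_add]
  exact mul_le_of_le_one_left (weight_pos β t).le (weight_le_one (sub_nonneg.2 h) t)

variable {X : Type*} [NormedAddCommGroup X] [InnerProductSpace ℝ X]

lemma contDiff_weight_norm (α : ℝ) : ContDiff ℝ ∞ fun x : X => weight α ‖x‖ :=
  (contDiff_const.add (contDiff_norm_sq ℝ)).rpow_const_of_ne fun x =>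
    (by positivity : (0 : ℝ) < 1 + ‖x‖ ^ 2).ne'

lemma dirDeriv_weight_norm (α : ℝ) (v : X) :
    dirDeriv v (fun x => weight α ‖x‖) = fun x => -α * inner ℝ x v * weight (α + 2) ‖x‖ := by
  funext x
  have h : HasFDerivAt (fun x : X => weight α ‖x‖) _ x :=
    ((hasStrictFDerivAt_norm_sq x).hasFDerivAt.const_add 1).rpow_const
      (.inl (by positivity : (0 : ℝ) < 1 + ‖x‖ ^ 2).ne')
  rw [dirDeriv, h.fderiv, weight, show -(α + 2) / 2 = -α / 2 - 1 by ring]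
  simp only [smul_apply, coe_innerSL_apply, nsmul_eq_mul, Nat.cast_ofNat, smul_eq_mul]
  ring

lemma abs_dirDeriv_weight_norm_le (hα : 0 ≤ α) (v x : X) :
    |dirDeriv v (fun x => weight α ‖x‖) x| ≤ α * ‖v‖ * weight α ‖x‖ := by
  have hx : ‖x‖ * weight 2 ‖x‖ ≤ 1 := by
    rw [weight_two, ← div_eq_mul_inv, div_le_one (by positivity)]
    nlinarith [sq_nonneg (‖x‖ - 1)]
  have hw := weight_pos
  calc |dirDeriv v (fun x => weight α ‖x‖) x|
      = α * |inner ℝ x v| * (weight α ‖x‖ * weight 2 ‖x‖) := by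
        rw [dirDeriv_weight_norm, abs_mul, abs_mul, abs_neg, abs_of_nonneg hα,
          abs_of_pos (hw _ _), weight_add]
    _ ≤ α * (‖x‖ * ‖v‖) * (weight α ‖x‖ * weight 2 ‖x‖) := by
        have := (hw α ‖x‖).le
        have := (hw 2 ‖x‖).le
        gcongr
        exact abs_real_inner_le_norm x v
    _ = α * ‖v‖ * weight α ‖x‖ * (‖x‖ * weight 2 ‖x‖) := by ring
    _ ≤ α * ‖v‖ * weight α ‖x‖ :=
        mul_le_of_le_one_right (mul_nonneg (by positivity) (hw _ _).le) hx

end Weight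

section CompactSupport

variable {V : Type*} [NormedAddCommGroup V] [NormedSpace ℝ V] [FiniteDimensional ℝ V]
  [MeasurableSpace V] [BorelSpace V] {μ : Measure V} [μ.IsAddHaarMeasure] {f g : V → ℝ}

lemma integral_mul_dirDeriv (hf : ContDiff ℝ ∞ f) (hg : ContDiff ℝ ∞ g) (hs : HasCompactSupport g)
    (v : V) : ∫ x, f x * dirDeriv v g x ∂μ = -∫ x, dirDeriv v f x * g x ∂μ := by
  have hf' := continuous_dirDeriv hf v
  have hg' := continuous_dirDeriv hg v
  exact integral_mul_fderiv_eq_neg_fderiv_mul_of_integrable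
    ((hf'.mul hg.continuous).integrable_of_hasCompactSupport hs.mul_left)
    ((hf.continuous.mul hg').integrable_of_hasCompactSupport (hs.fderiv_apply ℝ v).mul_left)
    ((hf.continuous.mul hg.continuous).integrable_of_hasCompactSupport hs.mul_left)
    (fun x _ => differentiable_of_smooth hf x) (fun x _ => differentiable_of_smooth hg x)

lemma integral_dirDeriv_eq_zero (hg : ContDiff ℝ ∞ g) (hs : HasCompactSupport g) (v : V) :
    ∫ x, dirDeriv v g x ∂μ = 0 := by
  simpa [dirDeriv_const] using
    integral_mul_dirDeriv (μ := μ) (contDiff_const (c := (1 : ℝ))) hg hs v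

end CompactSupport

section Hardy

variable {d : ℕ} {w : Space d → ℝ}

lemma dirDeriv_coord (i : Fin d) :
    dirDeriv (EuclideanSpace.single i 1) (fun x : Space d => x i) = fun _ => 1 := by
  funext x
  have h : HasFDerivAt (fun x : Space d => x i) (EuclideanSpace.proj i : Space d →L[ℝ] ℝ) x :=
    (EuclideanSpace.proj i : Space d →L[ℝ] ℝ).hasFDerivAt
  simp [dirDeriv, h.fderiv]

lemma dirDeriv_hardy_field (hw : ContDiff ℝ ∞ w) (i : Fin d) (x : Space d) :
    dirDeriv (EuclideanSpace.single i 1) (fun x => x i * (weight 2 ‖x‖ * (w x * w x))) x =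
      (weight 2 ‖x‖ - 2 * x i ^ 2 * weight 2 ‖x‖ ^ 2) * w x ^ 2 +
        2 * (x i * weight 2 ‖x‖ * w x) * dirDeriv (EuclideanSpace.single i 1) w x := by
  have hwd := differentiable_of_smooth hw
  have hκ := differentiable_of_smooth (contDiff_weight_norm (X := Space d) 2)
  rw [dirDeriv_mul (F₂ := fun x => weight 2 ‖x‖ * (w x * w x)) (by fun_prop) (by fun_prop),
    dirDeriv_mul hκ (by fun_prop), dirDeriv_mul hwd hwd, dirDeriv_coord, dirDeriv_weight_norm]
  simp only [EuclideanSpace.inner_single_right, weight_add]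
  simp only [one_mul, Real.ringHom_apply]
  ring

/-- Hardy's inequality holds pointwise up to the divergence of `⟨x⟩⁻²w²x`. -/
lemma hardy_pointwise (hd : 3 ≤ d) (hw : ContDiff ℝ ∞ w) (x : Space d) :
    1 / 2 * (weight 2 ‖x‖ * w x ^ 2) - 2 * ∑ i, dirDeriv (EuclideanSpace.single i 1) w x ^ 2 ≤
      ∑ i, dirDeriv (EuclideanSpace.single i 1)
        (fun x => x i * (weight 2 ‖x‖ * (w x * w x))) x := by
  set κ := weight 2 ‖x‖
  have hκw : 0 ≤ κ * w x ^ 2 := mul_nonneg (weight_pos _ _).le (sq_nonneg _)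
  have hsum : ∑ i, x i ^ 2 = ‖x‖ ^ 2 := by simp [EuclideanSpace.norm_sq_eq]
  have hcoord (i : Fin d) : κ * w x ^ 2 - 5 / 2 * (x i ^ 2 * (κ * (κ * w x ^ 2))) -
      2 * dirDeriv (EuclideanSpace.single i 1) w x ^ 2 ≤
        dirDeriv (EuclideanSpace.single i 1) (fun x => x i * (weight 2 ‖x‖ * (w x * w x))) x := by
    rw [dirDeriv_hardy_field hw]
    nlinarith [sq_nonneg (x i * κ * w x + 2 * dirDeriv (EuclideanSpace.single i 1) w x)]
  refine le_trans ?_ (Finset.sum_le_sum fun i _ => hcoord i)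
  have hdim : 3 * (κ * w x ^ 2) ≤ d * (κ * w x ^ 2) := by
    gcongr
    exact_mod_cast hd
  have hx : ‖x‖ ^ 2 * (κ * (κ * w x ^ 2)) ≤ κ * w x ^ 2 := by
    rw [← mul_assoc]
    exact mul_le_of_le_one_left hκw (sq_mul_weight_two_le _)
  simp only [Finset.sum_sub_distrib, ← Finset.mul_sum, ← Finset.sum_mul, hsum, Finset.sum_const,
    Finset.card_univ, Fintype.card_fin, nsmul_eq_mul]
  linarith

lemma integral_weight_two_mul_sq_le (hd : 3 ≤ d) (hw : ContDiff ℝ ∞ w)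
    (hs : HasCompactSupport w) :
    ∫ x, weight 2 ‖x‖ * w x ^ 2 ≤
      4 * ∫ x, ∑ i, dirDeriv (EuclideanSpace.single i 1) w x ^ 2 := by
  have hκ := contDiff_weight_norm (X := Space d) 2
  have hJ (i : Fin d) : ContDiff ℝ ∞ fun x : Space d => x i * (weight 2 ‖x‖ * (w x * w x)) := by
    fun_prop
  have hJs (i : Fin d) : HasCompactSupport fun x : Space d =>
      x i * (weight 2 ‖x‖ * (w x * w x)) := hs.mul_left.mul_left.mul_left
  have hint : Integrable fun x => weight 2 ‖x‖ * w x ^ 2 := by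
    simp only [sq (w _)]
    exact (hκ.continuous.mul (hw.continuous.mul hw.continuous)).integrable_of_hasCompactSupport
      hs.mul_left.mul_left
  have hgrad : Integrable fun x => ∑ i, dirDeriv (EuclideanSpace.single i 1) w x ^ 2 := by
    simp only [sq (dirDeriv _ _ _)]
    exact integrable_finsetSum _ fun i _ => ((continuous_dirDeriv hw _).mul
      (continuous_dirDeriv hw _)).integrable_of_hasCompactSupport (hs.fderiv_apply ℝ _).mul_left
  have hdiv (i : Fin d) : Integrable (dirDeriv (EuclideanSpace.single i 1)
      fun x : Space d => x i * (weight 2 ‖x‖ * (w x * w x))) :=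
    (continuous_dirDeriv (hJ i) _).integrable_of_hasCompactSupport ((hJs i).fderiv_apply ℝ _)
  have hle := integral_mono ((hint.const_mul (1 / 2)).sub (hgrad.const_mul 2))
    (integrable_finsetSum _ fun i _ => hdiv i) (hardy_pointwise hd hw)
  rw [integral_sub' (hint.const_mul _) (hgrad.const_mul _), integral_const_mul, integral_const_mul,
    integral_finsetSum _ fun i _ => hdiv i,
    Finset.sum_eq_zero fun i _ => integral_dirDeriv_eq_zero (hJ i) (hJs i) _] at hle
  linarith

end Hardy

/-! ### Energy and duality -/

section Conservation

variable {d : ℕ} {R : ℝ} {F U W : ℝ × Space d → ℝ} {J : Fin d → ℝ × Space d → ℝ}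

/-- Vanishing outside the light cone over the ball of radius `R`, the support property of waves
with data in that ball. -/
def SupportedInCone (R : ℝ) (F : ℝ × Space d → ℝ) : Prop :=
  ∀ p, R + |p.1| < ‖p.2‖ → F p = 0

lemma SupportedInCone.dirDeriv (hF : SupportedInCone R F) (v : ℝ × Space d) :
    SupportedInCone R (dirDeriv v F) :=
  dirDeriv_eq_zero_on (O := {p : ℝ × Space d | R + |p.1| < ‖p.2‖})
    (isOpen_lt (by fun_prop) (by fun_prop)) hF v

lemma SupportedInCone.hasCompactSupport_slice (hF : SupportedInCone R F) (s : ℝ) :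
    HasCompactSupport fun x => F (s, x) :=
  .intro (isCompact_closedBall (0 : Space d) (R + |s|)) fun x hx => hF _ (by simpa using hx)

lemma SupportedInCone.integrable_slice (hF : SupportedInCone R F) (hc : Continuous F) (s : ℝ) :
    Integrable fun x => F (s, x) :=
  (hc.comp (by fun_prop : Continuous fun x => (s, x))).integrable_of_hasCompactSupport
    (hF.hasCompactSupport_slice s)

lemma SupportedInCone.memLp_slice (hF : SupportedInCone R F) (hc : Continuous F) (s : ℝ) :
    MemLp (fun x => F (s, x)) 2 :=
  (hc.comp (by fun_prop : Continuous fun x => (s, x))).memLp_of_hasCompactSupport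
    (hF.hasCompactSupport_slice s)

lemma SupportedInCone.setIntegral_slice (hF : SupportedInCone R F) {s ρ : ℝ} (h : R + |s| ≤ ρ) :
    ∫ x in Metric.closedBall 0 ρ, F (s, x) = ∫ x, F (s, x) :=
  setIntegral_eq_integral_of_forall_compl_eq_zero fun x hx =>
    hF _ (h.trans_lt (by simpa using hx))

lemma SupportedInCone.hasDerivAt_integral_slice (hF : SupportedInCone R F) (hs : ContDiff ℝ ∞ F)
    (s : ℝ) : HasDerivAt (fun s => ∫ x, F (s, x)) (∫ x, ∂ₜ F (s, x)) s := by
  have hS : IsCompact (Metric.closedBall (0 : Space d) (R + (|s| + 1))) := isCompact_closedBall _ _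
  have hderiv := (hasFDerivAt_setIntegral (μ := volume) hS hs s).differentiableAt.hasDerivAt
  have hvalue := congrFun (dirDeriv_setIntegral (μ := volume) hS hs (1 : ℝ)) s
  rw [FreeWave.dirDeriv, fderiv_apply_one_eq_deriv, (hF.dirDeriv _).setIntegral_slice (by linarith)]
    at hvalue
  rw [hvalue] at hderiv
  refine hderiv.congr_of_eventuallyEq ?_
  filter_upwards [(continuous_abs.tendsto s).eventually_le_const (lt_add_one |s|)] with s' hs'
  exact (hF.setIntegral_slice (by linarith)).symm

lemma integral_slice_eq_of_conservationLaw (hF : SupportedInCone R F) (hFs : ContDiff ℝ ∞ F)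
    (hJ : ∀ i, SupportedInCone R (J i)) (hJs : ∀ i, ContDiff ℝ ∞ (J i))
    (hlaw : ∀ p, ∂ₜ F p = ∑ i, ∂ₓ[i] (J i) p) (s : ℝ) :
    ∫ x, F (s, x) = ∫ x, F (0, x) := by
  refine is_const_of_deriv_eq_zero
    (fun s => (hF.hasDerivAt_integral_slice hFs s).differentiableAt) (fun s => ?_) s 0
  rw [(hF.hasDerivAt_integral_slice hFs s).deriv]
  simp only [hlaw]
  rw [integral_finsetSum _ fun i _ =>
    ((hJ i).dirDeriv _).integrable_slice (continuous_dirDeriv (hJs i) _) s]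
  refine Finset.sum_eq_zero fun i _ => ?_
  rw [← dirDeriv_slice_right (differentiable_of_smooth (hJs i))]
  exact integral_dirDeriv_eq_zero ((hJs i).comp (by fun_prop)) ((hJ i).hasCompactSupport_slice s) _

/-- The energy density of a wave. -/
noncomputable def energyDensity (W : ℝ × Space d → ℝ) (p : ℝ × Space d) : ℝ :=
  ∂ₜ W p ^ 2 + ∑ i, ∂ₓ[i] W p ^ 2

lemma contDiff_energyDensity (hW : ContDiff ℝ ∞ W) : ContDiff ℝ ∞ (energyDensity W) :=
  ((contDiff_dirDeriv hW _).pow 2).add (ContDiff.sum fun _ _ => (contDiff_dirDeriv hW _).pow 2)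

lemma SupportedInCone.energyDensity (hW : SupportedInCone R W) :
    SupportedInCone R (energyDensity W) := fun p hp => by
  simp [FreeWave.energyDensity, hW.dirDeriv _ p hp]

lemma dirDeriv_energyDensity (hW : ContDiff ℝ ∞ W) (v : ℝ × Space d) (p : ℝ × Space d) :
    dirDeriv v (energyDensity W) p =
      2 * (∂ₜ W p * dirDeriv v (∂ₜ W) p + ∑ i, ∂ₓ[i] W p * dirDeriv v (∂ₓ[i] W) p) := by
  have hdiff (w : ℝ × Space d) := differentiable_of_smooth (contDiff_dirDeriv hW w)
  unfold energyDensity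
  simp only [sq]
  rw [dirDeriv_add (by fun_prop) (by fun_prop), dirDeriv_mul (hdiff _) (hdiff _),
    dirDeriv_sum _ fun i => by fun_prop]
  simp only [dirDeriv_mul (hdiff _) (hdiff _), Finset.sum_add_distrib, mul_add, two_mul,
    mul_comm (dirDeriv v (dirDeriv _ W) p)]

lemma integral_energyDensity (hW : ContDiff ℝ ∞ W) (hwave : IsWave W) (hs : SupportedInCone R W)
    (s : ℝ) : ∫ x, energyDensity W (s, x) = ∫ x, energyDensity W (0, x) := by
  have hsmooth (v : ℝ × Space d) := contDiff_dirDeriv hW v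
  have hdiff (v : ℝ × Space d) := differentiable_of_smooth (hsmooth v)
  refine integral_slice_eq_of_conservationLaw (J := fun i p => 2 * (∂ₜ W p * ∂ₓ[i] W p))
    hs.energyDensity (contDiff_energyDensity hW)
    (fun i p hp => by simp [hs.dirDeriv _ p hp])
    (fun i => contDiff_const.mul ((hsmooth _).mul (hsmooth _))) (fun p => ?_) s
  have hflux (i : Fin d) : ∂ₓ[i] (fun p => 2 * (∂ₜ W p * ∂ₓ[i] W p)) p =
      2 * (∂ₓ[i] W p * ∂ₜ (∂ₓ[i] W) p + ∂ₜ W p * ∂ₓ[i] (∂ₓ[i] W) p) := by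
    rw [dirDeriv_const_mul (by fun_prop), dirDeriv_mul (hdiff _) (hdiff _),
      dirDeriv_comm hW _ (1, 0)]
    ring
  simp only [hflux]
  rw [dirDeriv_energyDensity hW, hwave, ← Finset.mul_sum, Finset.sum_add_distrib, Finset.mul_sum,
    add_comm]

lemma integral_symplectic (hU : ContDiff ℝ ∞ U) (hUw : IsWave U) (hW : ContDiff ℝ ∞ W)
    (hWw : IsWave W) (hs : SupportedInCone R W) (s : ℝ) :
    ∫ x, (∂ₜ U (s, x) * W (s, x) - U (s, x) * ∂ₜ W (s, x)) =
      ∫ x, (∂ₜ U (0, x) * W (0, x) - U (0, x) * ∂ₜ W (0, x)) := by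
  have hU' (v : ℝ × Space d) := contDiff_dirDeriv hU v
  have hW' (v : ℝ × Space d) := contDiff_dirDeriv hW v
  have hsmooth (v : ℝ × Space d) :
      ContDiff ℝ ∞ fun p => dirDeriv v U p * W p - U p * dirDeriv v W p :=
    ((hU' v).mul hW).sub (hU.mul (hW' v))
  have hsupp (v : ℝ × Space d) : SupportedInCone R fun p =>
      dirDeriv v U p * W p - U p * dirDeriv v W p := fun p hp => by
    simp [hs p hp, hs.dirDeriv _ p hp]
  have hderiv (v p : ℝ × Space d) :
      dirDeriv v (fun p => dirDeriv v U p * W p - U p * dirDeriv v W p) p =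
        dirDeriv v (dirDeriv v U) p * W p - U p * dirDeriv v (dirDeriv v W) p := by
    have hUd := differentiable_of_smooth hU
    have hWd := differentiable_of_smooth hW
    have hUd' := differentiable_of_smooth (hU' v)
    have hWd' := differentiable_of_smooth (hW' v)
    rw [dirDeriv_sub (by fun_prop) (by fun_prop), dirDeriv_mul hUd' hWd, dirDeriv_mul hUd hWd']
    ring
  refine integral_slice_eq_of_conservationLaw (hsupp (1, 0)) (hsmooth (1, 0))
    (fun i => hsupp (0, EuclideanSpace.single i 1))
    (fun i => hsmooth (0, EuclideanSpace.single i 1)) (fun p => ?_) s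
  simp only [hderiv]
  rw [Finset.sum_sub_distrib, ← Finset.sum_mul, ← Finset.mul_sum, hUw, hWw]

end Conservation

/-- The `L²` norm of a real function as a real number, meaningful for square integrable
functions. -/
noncomputable def l2norm {X : Type*} [MeasurableSpace X] (f : X → ℝ)
    (μ : Measure X := by volume_tac) : ℝ :=
  √(∫ x, f x ^ 2 ∂μ)

section L2norm

variable {X : Type*} [MeasurableSpace X] {μ : Measure X} {f g h : X → ℝ} {c : ℝ}

lemma l2norm_nonneg (f : X → ℝ) (μ : Measure X) : 0 ≤ l2norm f μ :=
  Real.sqrt_nonneg _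

lemma sq_l2norm (f : X → ℝ) (μ : Measure X) : l2norm f μ ^ 2 = ∫ x, f x ^ 2 ∂μ :=
  Real.sq_sqrt (integral_nonneg fun _ => sq_nonneg _)

lemma ofReal_l2norm (hf : MemLp f 2 μ) : ENNReal.ofReal (l2norm f μ) = eLpNorm f 2 μ := by
  rw [hf.eLpNorm_eq_integral_rpow_norm (by norm_num) (by norm_num), l2norm, Real.sqrt_eq_rpow]
  simp

lemma abs_integral_mul_le_mul_l2norm (hc : 0 ≤ c) (hg : MemLp g 2 μ) (hh : MemLp h 2 μ)
    (hfg : ∀ x, h x ≠ 0 → |f x| ≤ c * g x) :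
    |∫ x, f x * h x ∂μ| ≤ c * l2norm g μ * l2norm h μ := by
  have hbound (x : X) : |f x * h x| ≤ c * (‖g x‖ * ‖h x‖) := by
    by_cases hx : h x = 0
    · simp [hx]
    rw [abs_mul, ← mul_assoc]
    gcongr
    · exact (hfg x hx).trans (by gcongr; exact le_abs_self _)
    · rfl
  have hholder := integral_mul_norm_le_Lp_mul_Lq (μ := μ) Real.HolderConjugate.two_two
    (by simpa using hg) (by simpa using hh)
  calc |∫ x, f x * h x ∂μ| ≤ ∫ x, |f x * h x| ∂μ := abs_integral_le_integral_abs
    _ ≤ ∫ x, c * (‖g x‖ * ‖h x‖) ∂μ := integral_mono_of_nonneg (.of_forall fun _ => abs_nonneg _)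
        ((hg.norm.integrable_mul hh.norm).const_mul c) (.of_forall hbound)
    _ = c * ∫ x, ‖g x‖ * ‖h x‖ ∂μ := integral_const_mul _ _
    _ ≤ c * l2norm g μ * l2norm h μ := by
        rw [mul_assoc]
        gcongr
        simpa [l2norm, Real.sqrt_eq_rpow] using hholder

end L2norm

section HuygensEstimates

variable {d : ℕ} {R : ℝ} {F U W : ℝ × Space d → ℝ}

lemma IsHuygensWave.supportedInCone (hW : IsHuygensWave R W) : SupportedInCone R W :=
  fun p hp => hW.eq_zero p (lt_abs.2 (.inl (by linarith)))

lemma IsHuygensWave.energyDensity_initial (hW : IsHuygensWave R W) (x : Space d) :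
    energyDensity W (0, x) = ∂ₜ W (0, x) ^ 2 := by
  have hspace (i : Fin d) : ∂ₓ[i] W (0, x) = 0 := by
    rw [← congrFun (dirDeriv_slice_right (differentiable_of_smooth hW.smooth) 0 _) x,
      show (fun x => W (0, x)) = fun _ => 0 from funext hW.initial, dirDeriv_const]
  simp [energyDensity, hspace]

lemma IsHuygensWave.integral_energyDensity (hW : IsHuygensWave R W) (s : ℝ) :
    ∫ x, energyDensity W (s, x) = ∫ x, ∂ₜ W (0, x) ^ 2 := by
  rw [FreeWave.integral_energyDensity hW.smooth hW.wave hW.supportedInCone]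
  simp only [hW.energyDensity_initial]

lemma IsHuygensWave.l2norm_le_of_sq_le (hW : IsHuygensWave R W) {f : Space d → ℝ} {s : ℝ}
    (hf : ∀ x, f x ^ 2 ≤ energyDensity W (s, x)) : l2norm f ≤ l2norm fun x => ∂ₜ W (0, x) := by
  refine Real.sqrt_le_sqrt ?_
  rw [← hW.integral_energyDensity s]
  exact integral_mono_of_nonneg (.of_forall fun x => sq_nonneg _)
    (hW.supportedInCone.energyDensity.integrable_slice
      (contDiff_energyDensity hW.smooth).continuous s) (.of_forall hf)

lemma IsHuygensWave.l2norm_dirDeriv_time_le (hW : IsHuygensWave R W) (s : ℝ) :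
    l2norm (fun x => ∂ₜ W (s, x)) ≤ l2norm fun x => ∂ₜ W (0, x) :=
  hW.l2norm_le_of_sq_le fun _ => le_add_of_nonneg_right (Finset.sum_nonneg fun _ _ => sq_nonneg _)

lemma IsHuygensWave.l2norm_dirDeriv_space_le (hW : IsHuygensWave R W) (s : ℝ) (i : Fin d) :
    l2norm (fun x => ∂ₓ[i] W (s, x)) ≤ l2norm fun x => ∂ₜ W (0, x) :=
  hW.l2norm_le_of_sq_le fun x => (Finset.single_le_sum (f := fun i => ∂ₓ[i] W (s, x) ^ 2)
    (fun _ _ => sq_nonneg _) (Finset.mem_univ i)).trans (le_add_of_nonneg_left (sq_nonneg _))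

lemma IsHuygensWave.l2norm_weight_mul_le (hW : IsHuygensWave R W) (hd : 3 ≤ d) (s : ℝ) :
    l2norm (fun x => weight 1 ‖x‖ * W (s, x)) ≤ 2 * l2norm fun x => ∂ₜ W (0, x) := by
  have hhardy := integral_weight_two_mul_sq_le hd
    (hW.smooth.comp (by fun_prop : ContDiff ℝ ∞ fun x => (s, x)))
    (hW.supportedInCone.hasCompactSupport_slice s)
  rw [l2norm, l2norm, Real.sqrt_le_left (by positivity), mul_pow, Real.sq_sqrt
    (integral_nonneg fun x => sq_nonneg _), ← hW.integral_energyDensity s]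
  calc ∫ x, (weight 1 ‖x‖ * W (s, x)) ^ 2 = ∫ x, weight 2 ‖x‖ * W (s, x) ^ 2 := by
        simp only [mul_pow, weight_one_sq]
    _ ≤ _ := hhardy
    _ ≤ 4 * ∫ x, energyDensity W (s, x) := by
        refine mul_le_mul_of_nonneg_left ?_ (by norm_num)
        refine integral_mono_of_nonneg
          (.of_forall fun x => Finset.sum_nonneg fun _ _ => sq_nonneg _)
          (hW.supportedInCone.energyDensity.integrable_slice
            (contDiff_energyDensity hW.smooth).continuous s) (.of_forall fun x => ?_)
        simp only [Function.comp_def, dirDeriv_slice_right (differentiable_of_smooth hW.smooth)]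
        exact le_add_of_nonneg_left (sq_nonneg _)
    _ = 2 ^ 2 * ∫ x, energyDensity W (s, x) := by norm_num

lemma IsHuygensWave.integral_mul_dirDeriv_space (hW : IsHuygensWave R W) (hF : ContDiff ℝ ∞ F)
    (s t : ℝ) (i : Fin d) :
    ∫ x, ∂ₓ[i] F (t, x) * W (s, x) = -∫ x, F (t, x) * ∂ₓ[i] W (s, x) := by
  have h := integral_mul_dirDeriv (μ := volume)
    (hF.comp (by fun_prop : ContDiff ℝ ∞ fun x => (t, x)))
    (hW.smooth.comp (by fun_prop : ContDiff ℝ ∞ fun x => (s, x)))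
    (hW.supportedInCone.hasCompactSupport_slice s) (EuclideanSpace.single i 1)
  simp only [Function.comp_def, dirDeriv_slice_right (differentiable_of_smooth hW.smooth),
    dirDeriv_slice_right (differentiable_of_smooth hF)] at h
  rw [h, neg_neg]

lemma IsHuygensWave.duality (hW : IsHuygensWave R W) (hU : ContDiff ℝ ∞ U) (hUw : IsWave U)
    (T : ℝ) : ∫ x, U (T, x) * ∂ₜ W (0, x) =
      (∫ x, U (0, x) * ∂ₜ W (-T, x)) - ∫ x, ∂ₜ U (0, x) * W (-T, x) := by
  have hsub : ContDiff ℝ ∞ fun p => U (p - ((-T, 0) : ℝ × Space d)) := hU.comp (by fun_prop)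
  have h := integral_symplectic hsub (hUw.comp_sub (-T, 0)) hW.smooth hW.wave
    hW.supportedInCone (-T)
  have hint₁ : Integrable fun x => ∂ₜ U (0, x) * W (-T, x) := by
    have := continuous_dirDeriv hU (1, 0)
    have := hW.smooth.continuous
    exact Continuous.integrable_of_hasCompactSupport (by fun_prop)
      (hW.supportedInCone.hasCompactSupport_slice _).mul_left
  have hint₂ : Integrable fun x => U (0, x) * ∂ₜ W (-T, x) := by
    have := continuous_dirDeriv hW.smooth (1, 0)
    have := hU.continuous
    exact Continuous.integrable_of_hasCompactSupport (by fun_prop)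
      ((hW.supportedInCone.dirDeriv _).hasCompactSupport_slice _).mul_left
  simp only [dirDeriv_comp_sub, Prod.mk_sub_mk, sub_zero, sub_neg_eq_add, zero_add,
    neg_add_cancel, hW.initial, mul_zero, zero_sub] at h
  rw [integral_neg, integral_sub hint₁ hint₂] at h
  linarith

end HuygensEstimates

/-! ### Localised bounds for waves with weighted data -/

section Localisation

variable {d : ℕ} {r ρ R M : ℝ} {F h : Space d → ℝ}

lemma tendsto_integral_of_isCompact {X : Type*} [TopologicalSpace X] [T2Space X]
    [MeasurableSpace X] [BorelSpace X] {μ : Measure X} [IsFiniteMeasureOnCompacts μ] {S : Set X}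
    (hS : IsCompact S) {g : ℕ → X → ℝ} {f b : X → ℝ} (hg : ∀ n, AEStronglyMeasurable (g n) μ)
    (hb : Continuous b) (hbound : ∀ n, ∀ x ∈ S, |g n x| ≤ b x) (hzero : ∀ n, ∀ x ∉ S, g n x = 0)
    (hlim : ∀ x, Tendsto (fun n => g n x) atTop (𝓝 (f x))) :
    Tendsto (fun n => ∫ x, g n x ∂μ) atTop (𝓝 (∫ x, f x ∂μ)) := by
  refine tendsto_integral_of_dominated_convergence (S.indicator b) hg
    ((integrable_indicator_iff hS.measurableSet).2 (hb.continuousOn.integrableOn_compact hS))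
    (fun n => .of_forall fun x => ?_) (.of_forall hlim)
  by_cases hx : x ∈ S
  · simpa [hx] using hbound n x hx
  · simp [hx, hzero n x hx]

lemma exists_seq_huygensWave (hd : 3 ≤ d) (hodd : Odd d) (hρR : ρ < R) (hh : ContDiff ℝ ∞ h)
    (hsupp : ∀ x, ρ < ‖x‖ → h x = 0) :
    ∃ W : ℕ → ℝ × Space d → ℝ, (∀ n, IsHuygensWave R (W n)) ∧
      (∀ n x, |∂ₜ (W n) (0, x)| ≤ |h x| + 1) ∧
      ∀ x, Tendsto (fun n => ∂ₜ (W n) (0, x)) atTop (𝓝 (h x)) := by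
  have hε (n : ℕ) : 0 < min 1 (R - ρ) / (n + 1) := by
    have := sub_pos.2 hρR
    positivity
  have hε_le (n : ℕ) : min 1 (R - ρ) / (n + 1) ≤ min 1 (R - ρ) :=
    div_le_self (le_min zero_le_one (by linarith)) (by simp)
  choose W hW hWh using fun n => exists_huygensWave hd hodd hh hsupp (hε n)
  refine ⟨W, fun n => (hW n).mono (by linarith [hε_le n, min_le_right 1 (R - ρ)]),
    fun n x => ?_, fun x => ?_⟩
  · linarith [hWh n x, hε_le n, min_le_left 1 (R - ρ),
      abs_sub_abs_le_abs_sub (∂ₜ (W n) (0, x)) (h x)]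
  · rw [tendsto_iff_norm_sub_tendsto_zero]
    refine squeeze_zero (fun _ => norm_nonneg _) (fun n => hWh n x) ?_
    simpa [div_eq_mul_inv] using tendsto_one_div_add_atTop_nhds_zero_nat.const_mul (min 1 (R - ρ))

lemma abs_integral_mul_le_of_forall_isHuygensWave (hd : 3 ≤ d) (hodd : Odd d) (hρR : ρ < R)
    (hh : ContDiff ℝ ∞ h) (hsupp : ∀ x, ρ < ‖x‖ → h x = 0) (hF : Continuous F)
    (hM : ∀ W, IsHuygensWave R W →
      |∫ x, F x * ∂ₜ W (0, x)| ≤ M * l2norm fun x => ∂ₜ W (0, x)) :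
    |∫ x, F x * h x| ≤ M * l2norm h := by
  obtain ⟨W, hW, hbound, hlim⟩ := exists_seq_huygensWave hd hodd hρR hh hsupp
  have hcont (n : ℕ) : Continuous fun x => ∂ₜ (W n) (0, x) :=
    (continuous_dirDeriv (hW n).smooth _).comp (by fun_prop)
  have hzero (n : ℕ) (x : Space d) (hx : x ∉ Metric.closedBall 0 R) : ∂ₜ (W n) (0, x) = 0 :=
    (hW n).supportedInCone.dirDeriv _ (0, x) (by simpa using hx)
  have hhc := hh.continuous
  have hpair : Tendsto (fun n => ∫ x, F x * ∂ₜ (W n) (0, x)) atTop (𝓝 (∫ x, F x * h x)) := by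
    refine tendsto_integral_of_isCompact (b := fun x => |F x| * (|h x| + 1))
      (isCompact_closedBall 0 R) (fun n => (hF.mul (hcont n)).aestronglyMeasurable) (by fun_prop)
      (fun n x _ => ?_) (fun n x hx => by simp [hzero n x hx]) fun x => (hlim x).const_mul _
    rw [abs_mul]
    exact mul_le_mul_of_nonneg_left (hbound n x) (abs_nonneg _)
  have hnorm : Tendsto (fun n => ∫ x, ∂ₜ (W n) (0, x) ^ 2) atTop (𝓝 (∫ x, h x ^ 2)) := by
    refine tendsto_integral_of_isCompact (b := fun x => (|h x| + 1) ^ 2)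
      (isCompact_closedBall 0 R) (fun n => ((hcont n).pow 2).aestronglyMeasurable) (by fun_prop)
      (fun n x _ => ?_) (fun n x hx => by simp [hzero n x hx]) fun x => (hlim x).pow 2
    rw [abs_pow]
    exact pow_le_pow_left₀ (abs_nonneg _) (hbound n x) 2
  exact le_of_tendsto_of_tendsto' hpair.abs (hnorm.sqrt.const_mul M) fun n => hM _ (hW n)

lemma eLpNorm_closedBall_le_of_forall_isHuygensWave (hd : 3 ≤ d) (hodd : Odd d) (hr : 0 < r)
    (hrR : r < R) (hF : ContDiff ℝ ∞ F)
    (hM : ∀ W, IsHuygensWave R W →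
      |∫ x, F x * ∂ₜ W (0, x)| ≤ M * l2norm fun x => ∂ₜ W (0, x)) :
    eLpNorm F 2 (volume.restrict (Metric.closedBall 0 r)) ≤ ENNReal.ofReal M := by
  let χ : ContDiffBump (0 : Space d) := ⟨r, (r + R) / 2, hr, by linarith⟩
  have hsupp (x : Space d) (hx : (r + R) / 2 < ‖x‖) : χ x * F x = 0 := by
    rw [χ.zero_of_le_dist (by simpa [χ] using hx.le), zero_mul]
  have hχF : ContDiff ℝ ∞ fun x => χ x * F x := χ.contDiff.mul hF
  have hχ : Continuous χ := χ.continuous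
  have hFc := hF.continuous
  have htest := abs_integral_mul_le_of_forall_isHuygensWave hd hodd (by linarith) hχF hsupp hFc hM
  have hsq : l2norm (fun x => χ x * F x) ^ 2 ≤ M * l2norm fun x => χ x * F x := by
    refine le_trans ?_ ((le_abs_self _).trans htest)
    rw [sq_l2norm]
    refine integral_mono_of_nonneg (.of_forall fun _ => sq_nonneg _)
      (Continuous.integrable_of_hasCompactSupport (by fun_prop)
        χ.hasCompactSupport.mul_right.mul_left) (.of_forall fun x => ?_)
    nlinarith [mul_nonneg (mul_nonneg (χ.nonneg (x := x)) (sub_nonneg.2 (χ.le_one (x := x))))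
      (sq_nonneg (F x))]
  have hle : ENNReal.ofReal (l2norm fun x => χ x * F x) ≤ ENNReal.ofReal M := by
    rcases (l2norm_nonneg (fun x => χ x * F x) volume).eq_or_lt with h0 | h0
    · simp [← h0]
    · exact ENNReal.ofReal_le_ofReal (le_of_mul_le_mul_right (by rwa [← sq]) h0)
  rw [ofReal_l2norm (hχF.continuous.memLp_of_hasCompactSupport
    χ.hasCompactSupport.mul_right)] at hle
  refine le_trans ?_ hle
  rw [← eLpNorm_indicator_eq_eLpNorm_restrict Metric.isClosed_closedBall.measurableSet]
  refine eLpNorm_mono fun x => ?_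
  by_cases hx : x ∈ Metric.closedBall (0 : Space d) r
  · simp [hx, χ.one_of_mem_closedBall hx]
  · rw [Set.indicator_of_notMem hx, norm_zero]
    exact norm_nonneg _

lemma eLpNorm_le_of_forall_closedBall (hF : Continuous F) {B : ENNReal}
    (h : ∀ r > 0, eLpNorm F 2 (volume.restrict (Metric.closedBall 0 r)) ≤ B) :
    eLpNorm F 2 volume ≤ B := by
  have hmeas (n : ℕ) : MeasurableSet (Metric.closedBall (0 : Space d) (n + 1)) :=
    Metric.isClosed_closedBall.measurableSet
  refine (Lp.eLpNorm_lim_le_liminf_eLpNorm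
    (f := fun n : ℕ => (Metric.closedBall (0 : Space d) (n + 1)).indicator F)
    (fun n => hF.aestronglyMeasurable.indicator (hmeas n)) F (.of_forall fun x => ?_)).trans ?_
  · obtain ⟨N, hN⟩ := exists_nat_ge ‖x‖
    refine tendsto_atTop_of_eventually_const (i₀ := N) fun n hn => Set.indicator_of_mem ?_ _
    have : (N : ℝ) ≤ n := by exact_mod_cast hn
    simpa using by linarith
  · refine liminf_le_of_le (by isBoundedDefault) fun b hb => ?_
    obtain ⟨n, hn⟩ := hb.exists
    rw [eLpNorm_indicator_eq_eLpNorm_restrict (hmeas n)] at hn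
    exact hn.trans (h _ (by positivity))

end Localisation

/-- A smooth wave whose Cauchy data at time `0`, including the spatial gradient, are dominated by
`⟨x⟩^{-α}` times the square integrable function `Q`. -/
structure IsWeightedWave {d : ℕ} (α : ℝ) (Q : Space d → ℝ) (U : ℝ × Space d → ℝ) : Prop where
  smooth : ContDiff ℝ ∞ U
  wave : IsWave U
  memLp : MemLp Q 2
  abs_le : ∀ y, |U (0, y)| ≤ weight α ‖y‖ * Q y
  abs_time_le : ∀ y, |∂ₜ U (0, y)| ≤ weight α ‖y‖ * Q y
  abs_space_le : ∀ i y, |∂ₓ[i] U (0, y)| ≤ weight α ‖y‖ * Q y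

section Pairing

variable {d : ℕ} {α a r R T : ℝ} {F Q w : Space d → ℝ} {U W : ℝ × Space d → ℝ}

lemma abs_integral_mul_le_of_eq_zero_off_shell (hα : 0 ≤ α) (ha : 0 ≤ a)
    (haR : a = 0 ∨ a + R ≤ |T|) (hQ : MemLp Q 2) (hF : ∀ y, |F y| ≤ weight α ‖y‖ * Q y)
    (hw : MemLp w 2) (hzero : ∀ y, R < |(‖y‖ - |T|)| → w y = 0) :
    |∫ x, F x * w x| ≤ weight α a * l2norm Q * l2norm w := by
  refine abs_integral_mul_le_mul_l2norm (weight_pos α a).le hQ hw fun y hy => ?_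
  have hshell : |(‖y‖ - |T|)| ≤ R := not_lt.1 (mt (hzero y) hy)
  have hay : a ≤ ‖y‖ := by
    rcases haR with rfl | haR
    · exact norm_nonneg y
    · linarith [abs_le.1 hshell]
  have hQy : 0 ≤ Q y := nonneg_of_mul_nonneg_right ((abs_nonneg _).trans (hF y)) (weight_pos _ _)
  exact (hF y).trans (mul_le_mul_of_nonneg_right
    (weight_le_weight hα (by rwa [abs_of_nonneg ha, abs_norm])) hQy)

lemma IsHuygensWave.abs_integral_mul_dirDeriv_le (hW : IsHuygensWave R W) (hα : 0 ≤ α)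
    (ha : 0 ≤ a) (haR : a = 0 ∨ a + R ≤ |T|) (hQ : MemLp Q 2)
    (hF : ∀ y, |F y| ≤ weight α ‖y‖ * Q y) {v : ℝ × Space d}
    (hv : l2norm (fun x => dirDeriv v W (-T, x)) ≤ l2norm fun x => ∂ₜ W (0, x)) :
    |∫ x, F x * dirDeriv v W (-T, x)| ≤
      weight α a * l2norm Q * l2norm fun x => ∂ₜ W (0, x) :=
  (abs_integral_mul_le_of_eq_zero_off_shell hα ha haR hQ hF
    ((hW.supportedInCone.dirDeriv v).memLp_slice (continuous_dirDeriv hW.smooth v) (-T))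
    fun y hy => hW.dirDeriv_eq_zero v (by simpa using hy)).trans
    (mul_le_mul_of_nonneg_left hv (mul_nonneg (weight_pos α a).le (l2norm_nonneg _ _)))

lemma IsHuygensWave.abs_integral_mul_le (hW : IsHuygensWave R W) (hd : 3 ≤ d) (hα : 1 ≤ α)
    (ha : 0 ≤ a) (haR : a = 0 ∨ a + R ≤ |T|) (hQ : MemLp Q 2)
    (hF : ∀ y, |F y| ≤ weight α ‖y‖ * Q y) :
    |∫ x, F x * W (-T, x)| ≤
      weight (α - 1) a * l2norm Q * (2 * l2norm fun x => ∂ₜ W (0, x)) := by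
  have hκ (y : Space d) : 0 < weight 1 ‖y‖ := weight_pos _ _
  have hF' (y : Space d) : |F y / weight 1 ‖y‖| ≤ weight (α - 1) ‖y‖ * Q y := by
    rw [abs_div, abs_of_pos (hκ y), div_le_iff₀ (hκ y), mul_right_comm, ← weight_add,
      sub_add_cancel]
    exact hF y
  have hsupp : SupportedInCone R fun p => weight 1 ‖p.2‖ * W p := fun p hp => by
    simp [hW.supportedInCone p hp]
  have hcont : Continuous fun p : ℝ × Space d => weight 1 ‖p.2‖ * W p :=
    ((contDiff_weight_norm 1).continuous.comp continuous_snd).mul hW.smooth.continuous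
  have hpair (y : Space d) :
      F y * W (-T, y) = F y / weight 1 ‖y‖ * (weight 1 ‖y‖ * W (-T, y)) := by
    rw [← mul_assoc, div_mul_cancel₀ _ (hκ y).ne']
  simp only [hpair]
  exact (abs_integral_mul_le_of_eq_zero_off_shell (sub_nonneg.2 hα) ha haR hQ hF'
    (hsupp.memLp_slice hcont (-T))
    fun y hy => by rw [hW.eq_zero _ (by simpa using hy), mul_zero]).trans
    (mul_le_mul_of_nonneg_left (hW.l2norm_weight_mul_le hd (-T))
      (mul_nonneg (weight_pos _ a).le (l2norm_nonneg _ _)))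

lemma exists_radius_gt {b : ℝ} (h : a = 0 ∨ a + r < b) : ∃ R, r < R ∧ (a = 0 ∨ a + R ≤ b) := by
  rcases h with ha | h
  · exact ⟨r + 1, by linarith, .inl ha⟩
  · exact ⟨b - a, by linarith, .inr (by linarith)⟩

namespace IsWeightedWave

lemma abs_integral_mul_le (hU : IsWeightedWave α Q U) (hW : IsHuygensWave R W) (hd : 3 ≤ d)
    (hα : 1 ≤ α) (ha : 0 ≤ a) (haR : a = 0 ∨ a + R ≤ |T|) :
    |∫ x, U (T, x) * ∂ₜ W (0, x)| ≤
      3 * weight (α - 1) a * l2norm Q * l2norm fun x => ∂ₜ W (0, x) := by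
  rw [hW.duality hU.smooth hU.wave]
  have hvalue := hW.abs_integral_mul_dirDeriv_le (by linarith) ha haR hU.memLp hU.abs_le
    (hW.l2norm_dirDeriv_time_le (-T))
  have hweight : weight α a ≤ weight (α - 1) a := weight_le_weight_of_le (by linarith) a
  calc _ ≤ _ := abs_sub _ _
    _ ≤ weight (α - 1) a * l2norm Q * (l2norm fun x => ∂ₜ W (0, x)) +
        weight (α - 1) a * l2norm Q * (2 * l2norm fun x => ∂ₜ W (0, x)) := by
      refine add_le_add (hvalue.trans ?_)
        (hW.abs_integral_mul_le hd hα ha haR hU.memLp hU.abs_time_le)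
      gcongr <;> exact l2norm_nonneg _ _
    _ = _ := by ring

lemma abs_integral_time_mul_le (hU : IsWeightedWave α Q U) (hW : IsHuygensWave R W) (hα : 0 ≤ α)
    (ha : 0 ≤ a) (haR : a = 0 ∨ a + R ≤ |T|) :
    |∫ x, ∂ₜ U (T, x) * ∂ₜ W (0, x)| ≤
      (1 + d) * weight α a * l2norm Q * l2norm fun x => ∂ₜ W (0, x) := by
  have hUt := contDiff_dirDeriv hU.smooth (1, 0)
  have hUx (i : Fin d) := contDiff_dirDeriv hU.smooth (0, EuclideanSpace.single i 1)
  have hacc : ∫ x, ∂ₜ (∂ₜ U) (0, x) * W (-T, x) =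
      -∑ i, ∫ x, ∂ₓ[i] U (0, x) * ∂ₓ[i] W (-T, x) := by
    simp only [hU.wave _, Finset.sum_mul]
    rw [integral_finsetSum _ fun i _ => ?_, ← Finset.sum_neg_distrib]
    · exact Finset.sum_congr rfl fun i _ => hW.integral_mul_dirDeriv_space (hUx i) _ _ i
    · have hWc := hW.smooth.continuous
      have hUc := continuous_dirDeriv (hUx i) (0, EuclideanSpace.single i 1)
      exact Continuous.integrable_of_hasCompactSupport (by fun_prop)
        (hW.supportedInCone.hasCompactSupport_slice _).mul_left
  rw [hW.duality hUt (hU.wave.dirDeriv hU.smooth _), hacc, sub_neg_eq_add]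
  refine (abs_add_le _ _).trans ((add_le_add
    (hW.abs_integral_mul_dirDeriv_le hα ha haR hU.memLp hU.abs_time_le
      (hW.l2norm_dirDeriv_time_le (-T)))
    ((Finset.abs_sum_le_sum_abs _ _).trans (Finset.sum_le_sum fun i _ =>
      hW.abs_integral_mul_dirDeriv_le hα ha haR hU.memLp (hU.abs_space_le i)
        (hW.l2norm_dirDeriv_space_le (-T) i)))).trans_eq ?_)
  rw [Finset.sum_const, Finset.card_univ, Fintype.card_fin, nsmul_eq_mul]
  ring

lemma abs_integral_space_mul_le (hU : IsWeightedWave α Q U) (hW : IsHuygensWave R W)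
    (hα : 0 ≤ α) (ha : 0 ≤ a) (haR : a = 0 ∨ a + R ≤ |T|) (i : Fin d) :
    |∫ x, ∂ₓ[i] U (T, x) * ∂ₜ W (0, x)| ≤
      2 * weight α a * l2norm Q * l2norm fun x => ∂ₜ W (0, x) := by
  rw [hW.duality (contDiff_dirDeriv hU.smooth _) (hU.wave.dirDeriv hU.smooth _),
    dirDeriv_comm hU.smooth (1, 0),
    hW.integral_mul_dirDeriv_space (contDiff_dirDeriv hU.smooth _), sub_neg_eq_add]
  refine (abs_add_le _ _).trans ((add_le_add
    (hW.abs_integral_mul_dirDeriv_le hα ha haR hU.memLp (hU.abs_space_le i)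
      (hW.l2norm_dirDeriv_time_le (-T)))
    (hW.abs_integral_mul_dirDeriv_le hα ha haR hU.memLp hU.abs_time_le
      (hW.l2norm_dirDeriv_space_le (-T) i))).trans_eq ?_)
  ring

lemma eLpNorm_closedBall_le (hU : IsWeightedWave α Q U) (hd : 3 ≤ d) (hodd : Odd d)
    (hα : 1 ≤ α) (hr : 0 < r) (ha : 0 ≤ a) (har : a = 0 ∨ a + r < |T|) :
    eLpNorm (fun x => U (T, x)) 2 (volume.restrict (Metric.closedBall 0 r)) ≤
      ENNReal.ofReal (3 * weight (α - 1) a * l2norm Q) := by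
  obtain ⟨R, hrR, haR⟩ := exists_radius_gt har
  exact eLpNorm_closedBall_le_of_forall_isHuygensWave hd hodd hr hrR
    (hU.smooth.comp (by fun_prop)) fun W hW => hU.abs_integral_mul_le hW hd hα ha haR

lemma eLpNorm_time_closedBall_le (hU : IsWeightedWave α Q U) (hd : 3 ≤ d) (hodd : Odd d)
    (hα : 0 ≤ α) (hr : 0 < r) (ha : 0 ≤ a) (har : a = 0 ∨ a + r < |T|) :
    eLpNorm (fun x => ∂ₜ U (T, x)) 2 (volume.restrict (Metric.closedBall 0 r)) ≤
      ENNReal.ofReal ((1 + d) * weight α a * l2norm Q) := by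
  obtain ⟨R, hrR, haR⟩ := exists_radius_gt har
  exact eLpNorm_closedBall_le_of_forall_isHuygensWave hd hodd hr hrR
    ((contDiff_dirDeriv hU.smooth _).comp (by fun_prop))
    fun W hW => hU.abs_integral_time_mul_le hW hα ha haR

lemma eLpNorm_space_closedBall_le (hU : IsWeightedWave α Q U) (hd : 3 ≤ d) (hodd : Odd d)
    (hα : 0 ≤ α) (hr : 0 < r) (ha : 0 ≤ a) (har : a = 0 ∨ a + r < |T|) (i : Fin d) :
    eLpNorm (fun x => ∂ₓ[i] U (T, x)) 2 (volume.restrict (Metric.closedBall 0 r)) ≤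
      ENNReal.ofReal (2 * weight α a * l2norm Q) := by
  obtain ⟨R, hrR, haR⟩ := exists_radius_gt har
  exact eLpNorm_closedBall_le_of_forall_isHuygensWave hd hodd hr hrR
    ((contDiff_dirDeriv hU.smooth _).comp (by fun_prop))
    fun W hW => hU.abs_integral_space_mul_le hW hα ha haR i

end IsWeightedWave

end Pairing

/-! ### Weighted bounds on the whole space -/

section Cutoff

/-- A smooth cutoff equal to `1` on the ball of radius `r` and to `0` off the ball of radius `2r`,
with derivative bounded by `ℓ`. -/
structure IsCutoff {X : Type*} [NormedAddCommGroup X] [NormedSpace ℝ X] (r ℓ : ℝ) (χ : X → ℝ) :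
    Prop where
  smooth : ContDiff ℝ ∞ χ
  nonneg : ∀ x, 0 ≤ χ x
  le_one : ∀ x, χ x ≤ 1
  eq_one : ∀ x, ‖x‖ ≤ r → χ x = 1
  eq_zero : ∀ x, 2 * r < ‖x‖ → χ x = 0
  abs_dirDeriv_le : ∀ v x, |dirDeriv v χ x| ≤ ℓ * ‖v‖

lemma exists_isCutoff (X : Type*) [NormedAddCommGroup X] [NormedSpace ℝ X] [HasContDiffBump X]
    [FiniteDimensional ℝ X] :
    ∃ L : ℝ, 0 ≤ L ∧ ∀ r > 0, ∃ χ : X → ℝ, IsCutoff r (L / r) χ := by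
  let χ : ContDiffBump (0 : X) := ⟨1, 2, one_pos, one_lt_two⟩
  have hχ : ContDiff ℝ ∞ χ := χ.contDiff
  obtain ⟨L, hL⟩ := (hχ.continuous_fderiv (by simp)).bounded_above_of_compact_support
    (χ.hasCompactSupport.fderiv ℝ)
  refine ⟨L, (norm_nonneg _).trans (hL 0), fun r hr => ⟨fun x => χ (r⁻¹ • x),
    hχ.comp (contDiff_const_smul _), fun _ => χ.nonneg, fun _ => χ.le_one,
    fun x hx => χ.one_of_mem_closedBall ?_, fun x hx => χ.zero_of_le_dist ?_, fun v x => ?_⟩⟩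
  · simpa [χ, norm_smul, abs_of_pos hr, inv_mul_le_iff₀ hr] using hx
  · simpa [χ, norm_smul, abs_of_pos hr, le_inv_mul_iff₀ hr, mul_comm r] using hx.le
  · rw [dirDeriv, fderiv_comp_smul, smul_apply, smul_eq_mul, abs_mul,
      abs_of_pos (inv_pos.2 hr), div_eq_inv_mul, mul_assoc]
    gcongr
    exact ContinuousLinearMap.le_of_opNorm_le _ (hL _) v

variable {X : Type*} [NormedAddCommGroup X] [NormedSpace ℝ X] {r ℓ : ℝ} {χ u : X → ℝ}

lemma IsCutoff.hasCompactSupport_mul [ProperSpace X] (hχ : IsCutoff r ℓ χ) (u : X → ℝ) :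
    HasCompactSupport fun x => χ x * u x :=
  .intro (isCompact_closedBall 0 (2 * r)) fun x hx => by
    rw [hχ.eq_zero x (by simpa using hx), zero_mul]

lemma IsCutoff.eLpNorm_dirDeriv_mul_le [MeasurableSpace X] [BorelSpace X] {μ : Measure X}
    [SecondCountableTopology X] (hχ : IsCutoff r ℓ χ) (hu : ContDiff ℝ ∞ u) (v : X) :
    eLpNorm (dirDeriv v fun x => χ x * u x) 2 μ ≤
      eLpNorm (dirDeriv v u) 2 (μ.restrict (Metric.closedBall 0 (2 * r))) +
        ENNReal.ofReal (ℓ * ‖v‖) * eLpNorm u 2 (μ.restrict (Metric.closedBall 0 (2 * r))) := by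
  have hzero (x : X) (hx : 2 * r < ‖x‖) : dirDeriv v (fun x => χ x * u x) x = 0 :=
    dirDeriv_eq_zero_on (O := {x : X | 2 * r < ‖x‖}) (isOpen_lt (by fun_prop) (by fun_prop))
      (fun x hx => by rw [hχ.eq_zero x hx, zero_mul]) v x hx
  have hχ' := continuous_dirDeriv hχ.smooth v
  have hu' := continuous_dirDeriv hu v
  have hχc := hχ.smooth.continuous
  have huc := hu.continuous
  rw [← eLpNorm_restrict_eq_of_support_subset (s := Metric.closedBall (0 : X) (2 * r))
      (Function.support_subset_iff'.2 fun x hx => hzero x (by simpa using hx)),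
    dirDeriv_mul (differentiable_of_smooth hχ.smooth) (differentiable_of_smooth hu), add_comm]
  refine (eLpNorm_add_le (f := fun x => dirDeriv v χ x * u x) (by fun_prop) (by fun_prop)
    one_le_two).trans (add_le_add ?_ (eLpNorm_mono fun x => ?_))
  · refine eLpNorm_le_mul_eLpNorm_of_ae_le_mul (.of_forall fun x => ?_) 2
    rw [norm_mul]
    exact mul_le_mul_of_nonneg_right (hχ.abs_dirDeriv_le v x) (norm_nonneg _)
  · rw [norm_mul, Real.norm_of_nonneg (hχ.nonneg x)]
    exact mul_le_of_le_one_left (norm_nonneg _) (hχ.le_one x)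

end Cutoff

section WeightedNorm

variable {d : ℕ} {α r ℓ : ℝ} {w u χ F : Space d → ℝ}

lemma eLpNorm_weight_one_mul_le (hd : 3 ≤ d) (hw : ContDiff ℝ ∞ w) (hs : HasCompactSupport w) :
    eLpNorm (fun x => weight 1 ‖x‖ * w x) 2 volume ≤
      2 * ∑ i, eLpNorm (dirDeriv (EuclideanSpace.single i 1) w) 2 volume := by
  have hκ := (contDiff_weight_norm (X := Space d) 1).continuous
  have hw' (i : Fin d) := continuous_dirDeriv hw (EuclideanSpace.single i 1)
  have hs' (i : Fin d) : HasCompactSupport (dirDeriv (EuclideanSpace.single i 1) w) :=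
    hs.fderiv_apply ℝ _
  have hsq : l2norm (fun x => weight 1 ‖x‖ * w x) ≤
      2 * ∑ i, l2norm (dirDeriv (EuclideanSpace.single i 1) w) := by
    have hnn (i : Fin d) := l2norm_nonneg (dirDeriv (EuclideanSpace.single i 1) w) volume
    refine (sq_le_sq₀ (l2norm_nonneg _ _)
      (mul_nonneg zero_le_two (Finset.sum_nonneg fun i _ => hnn i))).1 ?_
    calc l2norm (fun x => weight 1 ‖x‖ * w x) ^ 2
        = ∫ x, weight 2 ‖x‖ * w x ^ 2 := by simp only [sq_l2norm, mul_pow, weight_one_sq]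
      _ ≤ 4 * ∫ x, ∑ i, dirDeriv (EuclideanSpace.single i 1) w x ^ 2 :=
          integral_weight_two_mul_sq_le hd hw hs
      _ = 2 ^ 2 * ∑ i, l2norm (dirDeriv (EuclideanSpace.single i 1) w) ^ 2 := by
          rw [integral_finsetSum _ fun i _ =>
            ((hw' i).memLp_of_hasCompactSupport (hs' i)).integrable_sq]
          simp only [sq_l2norm]
          norm_num
      _ ≤ (2 * ∑ i, l2norm (dirDeriv (EuclideanSpace.single i 1) w)) ^ 2 := by
          rw [mul_pow]
          gcongr
          exact Finset.sum_sq_le_sq_sum_of_nonneg fun i _ => hnn i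
  rw [← ofReal_l2norm (f := fun x => weight 1 ‖x‖ * w x)
    ((hκ.mul hw.continuous).memLp_of_hasCompactSupport hs.mul_left)]
  refine (ENNReal.ofReal_le_ofReal hsq).trans_eq ?_
  rw [ENNReal.ofReal_mul zero_le_two, ENNReal.ofReal_sum_of_nonneg fun i _ => l2norm_nonneg _ _]
  simp only [ofReal_l2norm ((hw' _).memLp_of_hasCompactSupport (hs' _)), ENNReal.ofReal_ofNat]

lemma IsCutoff.eLpNorm_weight_one_mul_closedBall_le (hχ : IsCutoff r ℓ χ) (hd : 3 ≤ d)
    (hu : ContDiff ℝ ∞ u) :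
    eLpNorm (fun x => weight 1 ‖x‖ * u x) 2 (volume.restrict (Metric.closedBall 0 r)) ≤
      2 * ∑ i, (eLpNorm (dirDeriv (EuclideanSpace.single i 1) u) 2
          (volume.restrict (Metric.closedBall 0 (2 * r))) +
        ENNReal.ofReal ℓ * eLpNorm u 2 (volume.restrict (Metric.closedBall 0 (2 * r)))) := by
  calc eLpNorm (fun x => weight 1 ‖x‖ * u x) 2 (volume.restrict (Metric.closedBall 0 r))
      = eLpNorm (fun x => weight 1 ‖x‖ * (χ x * u x)) 2
          (volume.restrict (Metric.closedBall 0 r)) :=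
        eLpNorm_congr_ae ((ae_restrict_mem Metric.isClosed_closedBall.measurableSet).mono
          fun x hx => by simp only [hχ.eq_one x (by simpa using hx), one_mul])
    _ ≤ eLpNorm (fun x => weight 1 ‖x‖ * (χ x * u x)) 2 volume :=
        eLpNorm_mono_measure _ Measure.restrict_le_self
    _ ≤ _ := eLpNorm_weight_one_mul_le hd (hχ.smooth.mul hu) (hχ.hasCompactSupport_mul u)
    _ ≤ _ := by
        gcongr with i
        simpa using hχ.eLpNorm_dirDeriv_mul_le (μ := volume) hu (EuclideanSpace.single i 1)

lemma eLpNorm_weight_mul_le_add (hα : 0 ≤ α) (hr : 0 ≤ r) (hF : Continuous F) :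
    eLpNorm (fun x => weight α ‖x‖ * F x) 2 volume ≤
      eLpNorm (fun x => weight α ‖x‖ * F x) 2 (volume.restrict (Metric.closedBall 0 r)) +
        ENNReal.ofReal (weight α r) * eLpNorm F 2 volume := by
  have hS : MeasurableSet (Metric.closedBall (0 : Space d) r) :=
    Metric.isClosed_closedBall.measurableSet
  have hwF : AEStronglyMeasurable (fun x => weight α ‖x‖ * F x) volume :=
    ((contDiff_weight_norm α).continuous.mul hF).aestronglyMeasurable
  rw [← Set.indicator_self_add_compl (Metric.closedBall (0 : Space d) r)
    fun x => weight α ‖x‖ * F x]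
  refine (eLpNorm_add_le (hwF.indicator hS) (hwF.indicator hS.compl) one_le_two).trans
    (add_le_add ?_ (eLpNorm_le_mul_eLpNorm_of_ae_le_mul (.of_forall fun x => ?_) 2))
  · rw [eLpNorm_indicator_eq_eLpNorm_restrict hS, Set.indicator_self_add_compl]
  · by_cases hx : ‖x‖ ≤ r
    · rw [Set.indicator_of_notMem (by simpa using hx), norm_zero]
      exact mul_nonneg (weight_pos α r).le (norm_nonneg _)
    · rw [Set.indicator_of_mem (by simpa using hx), norm_mul,
        Real.norm_of_nonneg (weight_pos _ _).le]
      refine mul_le_mul_of_nonneg_right (weight_le_weight hα ?_) (norm_nonneg _)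
      rw [abs_of_nonneg hr, abs_norm]
      exact (not_le.1 hx).le

lemma eLpNorm_weight_mul_anti {β : ℝ} (h : β ≤ α) (F : Space d → ℝ) (μ : Measure (Space d)) :
    eLpNorm (fun x => weight α ‖x‖ * F x) 2 μ ≤ eLpNorm (fun x => weight β ‖x‖ * F x) 2 μ := by
  refine eLpNorm_mono fun x => ?_
  rw [norm_mul, norm_mul, Real.norm_of_nonneg (weight_pos _ _).le,
    Real.norm_of_nonneg (weight_pos _ _).le]
  exact mul_le_mul_of_nonneg_right (weight_le_weight_of_le h _) (norm_nonneg _)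

lemma eLpNorm_weight_mul_le_eLpNorm (hα : 0 ≤ α) (F : Space d → ℝ) (μ : Measure (Space d)) :
    eLpNorm (fun x => weight α ‖x‖ * F x) 2 μ ≤ eLpNorm F 2 μ := by
  simpa [weight] using eLpNorm_weight_mul_anti hα F μ

lemma eLpNorm_dirDeriv_weight_mul_le (hα : 0 ≤ α) (hu : ContDiff ℝ ∞ u) (v : Space d) :
    eLpNorm (dirDeriv v fun x => weight α ‖x‖ * u x) 2 volume ≤
      ENNReal.ofReal (α * ‖v‖) * eLpNorm (fun x => weight α ‖x‖ * u x) 2 volume +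
        eLpNorm (fun x => weight α ‖x‖ * dirDeriv v u x) 2 volume := by
  have hκ := contDiff_weight_norm (X := Space d) α
  have hκ' := (continuous_dirDeriv hκ v).mul hu.continuous
  have hu' := hκ.continuous.mul (continuous_dirDeriv hu v)
  rw [dirDeriv_mul (differentiable_of_smooth hκ) (differentiable_of_smooth hu)]
  refine (eLpNorm_add_le hκ'.aestronglyMeasurable hu'.aestronglyMeasurable one_le_two).trans
    (add_le_add_left (eLpNorm_le_mul_eLpNorm_of_ae_le_mul (.of_forall fun x => ?_) 2) _)
  rw [Pi.mul_apply, norm_mul, norm_mul, ← mul_assoc, Real.norm_of_nonneg (weight_pos _ _).le]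
  exact mul_le_mul_of_nonneg_right (abs_dirDeriv_weight_norm_le hα v x) (norm_nonneg _)

/-- The dichotomy `|x| ≤ |T| / 8` or `|x| > |T| / 8`: the second region is controlled by the decay
of the weight alone. -/
lemma eLpNorm_weight_mul_le_of_forall_closedBall (hα : 0 ≤ α) (hF : Continuous F) {T A B : ℝ}
    (hA : 0 ≤ A) (hB : 0 ≤ B)
    (hglobal : ∀ r > 0, eLpNorm F 2 (volume.restrict (Metric.closedBall 0 r)) ≤ ENNReal.ofReal B)
    (hlocal : 1 ≤ |T| →
      eLpNorm (fun x => weight α ‖x‖ * F x) 2 (volume.restrict (Metric.closedBall 0 (|T| / 8))) ≤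
        ENNReal.ofReal (A * weight α (|T| / 2))) :
    eLpNorm (fun x => weight α ‖x‖ * F x) 2 volume ≤
      ENNReal.ofReal (8 ^ α * (A + B) * weight α T) := by
  have hFB : eLpNorm F 2 volume ≤ ENNReal.ofReal B := eLpNorm_le_of_forall_closedBall hF hglobal
  have := (weight_pos α T).le
  have hscale {s : ℝ} (h : 1 + T ^ 2 ≤ 8 ^ 2 * (1 + s ^ 2)) : weight α s ≤ 8 ^ α * weight α T :=
    weight_le_rpow_mul_weight hα (by norm_num) h
  have hT := sq_abs T
  rcases lt_or_ge |T| 1 with hT₁ | hT₁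
  · have h₀ : 1 ≤ 8 ^ α * weight α T := by
      simpa [weight_zero_right] using hscale (s := 0) (by nlinarith [abs_nonneg T])
    refine ((eLpNorm_weight_mul_le_eLpNorm hα F volume).trans hFB).trans
      (ENNReal.ofReal_le_ofReal ?_)
    calc B ≤ (A + B) * (8 ^ α * weight α T) := by nlinarith
      _ = 8 ^ α * (A + B) * weight α T := by ring
  · refine (eLpNorm_weight_mul_le_add hα (by positivity : 0 ≤ |T| / 8) hF).trans
      ((add_le_add (hlocal hT₁) (mul_le_mul_right hFB _)).trans ?_)
    rw [← ENNReal.ofReal_mul (weight_pos _ _).le, ← ENNReal.ofReal_add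
      (mul_nonneg hA (weight_pos _ _).le) (mul_nonneg (weight_pos _ _).le hB)]
    refine ENNReal.ofReal_le_ofReal ?_
    calc A * weight α (|T| / 2) + weight α (|T| / 8) * B
        ≤ A * (8 ^ α * weight α T) + 8 ^ α * weight α T * B := by
          gcongr
          · exact hscale (by nlinarith)
          · exact hscale (by nlinarith)
      _ = 8 ^ α * (A + B) * weight α T := by ring

end WeightedNorm

namespace IsWeightedWave

variable {d : ℕ} {α T L : ℝ} {Q : Space d → ℝ} {U : ℝ × Space d → ℝ}

lemma eLpNorm_weight_mul_closedBall_le (hU : IsWeightedWave α Q U) (hd : 3 ≤ d) (hodd : Odd d)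
    (hα : 1 ≤ α) {χ : Space d → ℝ} (hχ : IsCutoff (|T| / 8) (L / (|T| / 8)) χ) (hL : 0 ≤ L)
    (hT : 1 ≤ |T|) :
    eLpNorm (fun x => weight α ‖x‖ * U (T, x)) 2 (volume.restrict (Metric.closedBall 0 (|T| / 8))) ≤
      ENNReal.ofReal (d * (4 + 96 * L) * l2norm Q * weight α (|T| / 2)) := by
  have hN := l2norm_nonneg Q volume
  have hw := (weight_pos α (|T| / 2)).le
  have hweight : weight (α - 1) (|T| / 2) ≤ 2 * |T| * weight α (|T| / 2) := by
    refine (weight_sub_one_le α (|T| / 2)).trans (mul_le_mul_of_nonneg_right ?_ hw)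
    rw [abs_of_nonneg (by positivity)]
    linarith
  have hvalue : eLpNorm (fun x => U (T, x)) 2
      (volume.restrict (Metric.closedBall 0 (2 * (|T| / 8)))) ≤
        ENNReal.ofReal (6 * |T| * weight α (|T| / 2) * l2norm Q) := by
    refine (hU.eLpNorm_closedBall_le hd hodd hα (a := |T| / 2) (by positivity) (by positivity)
      (.inr (by linarith))).trans (ENNReal.ofReal_le_ofReal ?_)
    exact mul_le_mul_of_nonneg_right (by linarith) hN
  have hspace (i : Fin d) := hU.eLpNorm_space_closedBall_le hd hodd (by linarith)
    (r := 2 * (|T| / 8)) (a := |T| / 2) (T := T) (by positivity) (by positivity)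
    (.inr (by linarith)) i
  calc eLpNorm (fun x => weight α ‖x‖ * U (T, x)) 2
        (volume.restrict (Metric.closedBall 0 (|T| / 8)))
      ≤ eLpNorm (fun x => weight 1 ‖x‖ * U (T, x)) 2
          (volume.restrict (Metric.closedBall 0 (|T| / 8))) := eLpNorm_weight_mul_anti hα _ _
    _ ≤ _ := hχ.eLpNorm_weight_one_mul_closedBall_le hd (hU.smooth.comp (by fun_prop))
    _ ≤ 2 * ∑ _ : Fin d, (ENNReal.ofReal (2 * weight α (|T| / 2) * l2norm Q) +
          ENNReal.ofReal (L / (|T| / 8)) *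
            ENNReal.ofReal (6 * |T| * weight α (|T| / 2) * l2norm Q)) := by
        gcongr with i
        rw [dirDeriv_slice_right (differentiable_of_smooth hU.smooth)]
        exact hspace i
    _ = ENNReal.ofReal (2 * (d * (2 * weight α (|T| / 2) * l2norm Q +
          L / (|T| / 8) * (6 * |T| * weight α (|T| / 2) * l2norm Q)))) := by
        rw [Finset.sum_const, Finset.card_univ, Fintype.card_fin, nsmul_eq_mul,
          ← ENNReal.ofReal_mul (by positivity), ← ENNReal.ofReal_add (by positivity)
          (by positivity), ENNReal.ofReal_mul zero_le_two, ENNReal.ofReal_mul (by positivity),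
          ENNReal.ofReal_ofNat, ENNReal.ofReal_natCast]
    _ = _ := by
        congr 1
        field_simp
        ring

lemma eLpNorm_weight_mul_le (hU : IsWeightedWave α Q U) (hd : 3 ≤ d) (hodd : Odd d)
    (hα : 1 ≤ α) (hL : 0 ≤ L) (hcut : ∀ r > 0, ∃ χ : Space d → ℝ, IsCutoff r (L / r) χ) (T : ℝ) :
    eLpNorm (fun x => weight α ‖x‖ * U (T, x)) 2 volume ≤
      ENNReal.ofReal (8 ^ α * (d * (4 + 96 * L) * l2norm Q + 3 * l2norm Q) * weight α T) := by
  have hN := l2norm_nonneg Q volume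
  refine eLpNorm_weight_mul_le_of_forall_closedBall (F := fun x => U (T, x)) (by linarith)
    (hU.smooth.continuous.comp (by fun_prop)) (by positivity) (by positivity) (fun r hr => ?_)
    fun hT => ?_
  · simpa [weight_zero_right] using
      hU.eLpNorm_closedBall_le hd hodd hα (T := T) hr le_rfl (.inl rfl)
  · obtain ⟨χ, hχ⟩ := hcut (|T| / 8) (by positivity)
    exact hU.eLpNorm_weight_mul_closedBall_le hd hodd hα hχ hL hT

lemma eLpNorm_weight_mul_time_le (hU : IsWeightedWave α Q U) (hd : 3 ≤ d) (hodd : Odd d)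
    (hα : 0 ≤ α) (T : ℝ) :
    eLpNorm (fun x => weight α ‖x‖ * ∂ₜ U (T, x)) 2 volume ≤
      ENNReal.ofReal (8 ^ α * ((1 + d) * l2norm Q + (1 + d) * l2norm Q) * weight α T) := by
  have hN := l2norm_nonneg Q volume
  refine eLpNorm_weight_mul_le_of_forall_closedBall (F := fun x => ∂ₜ U (T, x)) hα
    ((continuous_dirDeriv hU.smooth _).comp (by fun_prop)) (by positivity) (by positivity)
    (fun r hr => ?_) fun hT => (eLpNorm_weight_mul_le_eLpNorm hα _ _).trans ?_
  · simpa [weight_zero_right] using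
      hU.eLpNorm_time_closedBall_le hd hodd hα (T := T) hr le_rfl (.inl rfl)
  · rw [mul_right_comm]
    exact hU.eLpNorm_time_closedBall_le hd hodd hα (by positivity) (by positivity)
      (.inr (by linarith))

lemma eLpNorm_weight_mul_space_le (hU : IsWeightedWave α Q U) (hd : 3 ≤ d) (hodd : Odd d)
    (hα : 0 ≤ α) (T : ℝ) (i : Fin d) :
    eLpNorm (fun x => weight α ‖x‖ * ∂ₓ[i] U (T, x)) 2 volume ≤
      ENNReal.ofReal (8 ^ α * (2 * l2norm Q + 2 * l2norm Q) * weight α T) := by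
  have hN := l2norm_nonneg Q volume
  refine eLpNorm_weight_mul_le_of_forall_closedBall (F := fun x => ∂ₓ[i] U (T, x)) hα
    ((continuous_dirDeriv hU.smooth _).comp (by fun_prop)) (by positivity) (by positivity)
    (fun r hr => ?_) fun hT => (eLpNorm_weight_mul_le_eLpNorm hα _ _).trans ?_
  · simpa [weight_zero_right] using
      hU.eLpNorm_space_closedBall_le hd hodd hα (T := T) hr le_rfl (.inl rfl) i
  · rw [mul_right_comm]
    exact hU.eLpNorm_space_closedBall_le hd hodd hα (by positivity) (by positivity)
      (.inr (by linarith)) i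

lemma eLpNorm_dirDeriv_weight_mul_le {B : ENNReal} (hU : IsWeightedWave α Q U) (hα : 0 ≤ α)
    (i : Fin d) (hvalue : eLpNorm (fun x => weight α ‖x‖ * U (T, x)) 2 volume ≤ B)
    (hspace : eLpNorm (fun x => weight α ‖x‖ * ∂ₓ[i] U (T, x)) 2 volume ≤ B) :
    eLpNorm (dirDeriv (EuclideanSpace.single i 1) fun x => weight α ‖x‖ * U (T, x)) 2 volume ≤
      ENNReal.ofReal (1 + α) * B := by
  refine (FreeWave.eLpNorm_dirDeriv_weight_mul_le (u := fun x => U (T, x)) hα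
    (hU.smooth.comp (by fun_prop)) _).trans ?_
  rw [dirDeriv_slice_right (differentiable_of_smooth hU.smooth), ENNReal.ofReal_add zero_le_one hα,
    ENNReal.ofReal_one, add_mul, one_mul, add_comm]
  gcongr
  simp

theorem exists_forall_eLpNorm_le (hd : 3 ≤ d) (hodd : Odd d) (hα : 1 ≤ α) :
    ∃ C > 0, ∀ (Q : Space d → ℝ) (U : ℝ × Space d → ℝ), IsWeightedWave α Q U → ∀ T : ℝ,
      eLpNorm (fun x => weight α ‖x‖ * U (T, x)) 2 volume ≤
          ENNReal.ofReal (C * weight α T * l2norm Q) ∧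
        eLpNorm (fun x => weight α ‖x‖ * ∂ₜ U (T, x)) 2 volume ≤
          ENNReal.ofReal (C * weight α T * l2norm Q) ∧
        ∀ i, eLpNorm (dirDeriv (EuclideanSpace.single i 1) fun x => weight α ‖x‖ * U (T, x)) 2
          volume ≤ ENNReal.ofReal ((1 + α) * (C * weight α T * l2norm Q)) := by
  obtain ⟨L, hL, hcut⟩ := exists_isCutoff (Space d)
  have hα₀ : 0 ≤ α := by linarith
  set C := 8 ^ α * (d * (4 + 96 * L) + 2 * (1 + d) + 4)
  refine ⟨C, by positivity, fun Q U hU T => ?_⟩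
  have hle {c : ℝ} (hc : c ≤ d * (4 + 96 * L) + 2 * (1 + d) + 4) :
      ENNReal.ofReal (8 ^ α * (c * l2norm Q) * weight α T) ≤
        ENNReal.ofReal (C * weight α T * l2norm Q) := by
    have hN := l2norm_nonneg Q volume
    have hw := (weight_pos α T).le
    rw [← mul_assoc (8 ^ α), mul_right_comm]
    gcongr
    exact mul_le_mul_of_nonneg_left hc (by positivity)
  have hdL : 0 ≤ d * (4 + 96 * L) := by positivity
  have : (0 : ℝ) ≤ d := d.cast_nonneg
  have hvalue := hU.eLpNorm_weight_mul_le hd hodd hα hL hcut T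
  have htime := hU.eLpNorm_weight_mul_time_le hd hodd hα₀ T
  have hspace := hU.eLpNorm_weight_mul_space_le hd hodd hα₀ T
  simp only [← add_mul] at hvalue htime hspace
  have hvalue' := hvalue.trans (hle (by linarith))
  refine ⟨hvalue', htime.trans (hle (by linarith)), fun i => ?_⟩
  rw [ENNReal.ofReal_mul (by linarith)]
  exact hU.eLpNorm_dirDeriv_weight_mul_le hα₀ i hvalue' ((hspace i).trans (hle (by linarith)))

end IsWeightedWave

/-! ### Complex-valued waves -/

section Components

variable {X G : Type*} [NormedAddCommGroup G] [NormedSpace ℝ G] {d : ℕ} {p : ENNReal}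

lemma eLpNorm_le_two_mul_of_forall_clm [MeasurableSpace X] {μ : Measure X} {f : X → ℂ}
    (hp : 1 ≤ p) (hf : AEStronglyMeasurable f μ) {B : ENNReal}
    (h : ∀ l : ℂ →L[ℝ] ℝ, ‖l‖ ≤ 1 → eLpNorm (fun x => l (f x)) p μ ≤ B) :
    eLpNorm f p μ ≤ 2 * B := by
  have hre := h Complex.reCLM Complex.reCLM_norm.le
  have him := h Complex.imCLM Complex.imCLM_norm.le
  calc eLpNorm f p μ
      ≤ eLpNorm ((fun x => ‖Complex.reCLM (f x)‖) + fun x => ‖Complex.imCLM (f x)‖) p μ :=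
        eLpNorm_mono_real fun x => Complex.norm_le_abs_re_add_abs_im (f x)
    _ ≤ eLpNorm (fun x => ‖Complex.reCLM (f x)‖) p μ +
          eLpNorm (fun x => ‖Complex.imCLM (f x)‖) p μ :=
        eLpNorm_add_le (Complex.reCLM.continuous.comp_aestronglyMeasurable hf).norm
          (Complex.imCLM.continuous.comp_aestronglyMeasurable hf).norm hp
    _ ≤ 2 * B := by
        rw [eLpNorm_norm, eLpNorm_norm, two_mul]
        exact add_le_add hre him

lemma opNorm_le_sum_norm_apply_single (A : Space d →L[ℝ] G) :
    ‖A‖ ≤ ∑ i, ‖A (EuclideanSpace.single i 1)‖ := by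
  refine A.opNorm_le_bound (Finset.sum_nonneg fun _ _ => norm_nonneg _) fun x => ?_
  have hx : x = ∑ i, x i • EuclideanSpace.single i (1 : ℝ) := by
    simpa using ((EuclideanSpace.basisFun (Fin d) ℝ).sum_repr x).symm
  calc ‖A x‖ = ‖∑ i, x i • A (EuclideanSpace.single i 1)‖ := by
        conv_lhs => rw [hx, map_sum]
        simp only [map_smul]
    _ ≤ ∑ i, ‖x i • A (EuclideanSpace.single i 1)‖ := norm_sum_le _ _
    _ ≤ (∑ i, ‖A (EuclideanSpace.single i 1)‖) * ‖x‖ := by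
        rw [Finset.sum_mul]
        refine Finset.sum_le_sum fun i _ => ?_
        rw [norm_smul, mul_comm]
        gcongr
        exact PiLp.norm_apply_le x i

lemma eLpNorm_fderiv_le_sum {μ : Measure (Space d)} {f : Space d → G} (hp : 1 ≤ p)
    (hf : ContDiff ℝ ∞ f) :
    eLpNorm (fderiv ℝ f) p μ ≤ ∑ i, eLpNorm (dirDeriv (EuclideanSpace.single i 1) f) p μ := by
  have hf' (i : Fin d) := (continuous_dirDeriv hf (EuclideanSpace.single i 1)).norm
  calc eLpNorm (fderiv ℝ f) p μ
      ≤ eLpNorm (∑ i, fun x => ‖dirDeriv (EuclideanSpace.single i 1) f x‖) p μ :=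
        eLpNorm_mono_real fun x => by
          simpa [dirDeriv] using opNorm_le_sum_norm_apply_single (fderiv ℝ f x)
    _ ≤ ∑ i, eLpNorm (fun x => ‖dirDeriv (EuclideanSpace.single i 1) f x‖) p μ :=
        eLpNorm_sum_le (fun i _ => (hf' i).aestronglyMeasurable) hp
    _ = ∑ i, eLpNorm (dirDeriv (EuclideanSpace.single i 1) f) p μ := by simp only [eLpNorm_norm]

lemma contDiff_of_contDiff_weight_smul {X : Type*} [NormedAddCommGroup X] [InnerProductSpace ℝ X]
    {α : ℝ} {v : X → G} (h : ContDiff ℝ ∞ fun x => weight α ‖x‖ • v x) : ContDiff ℝ ∞ v := by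
  have hv : v = fun x => weight (-α) ‖x‖ • weight α ‖x‖ • v x := by
    funext x
    rw [smul_smul, ← weight_add, neg_add_cancel]
    simp [weight]
  rw [hv]
  exact (contDiff_weight_norm (-α)).smul h

lemma isWave_of_lapD {P : ℝ × Space d → ℂ} (hP : ContDiff ℝ ∞ P)
    (h : ∀ s x, deriv (fun r => deriv (fun q => P (q, x)) r) s = lapD d (fun y => P (s, y)) x) :
    IsWave P := by
  rintro ⟨s, x⟩
  have htime {F : ℝ × Space d → ℂ} (hF : ContDiff ℝ ∞ F) (s : ℝ) :
      deriv (fun q => F (q, x)) s = ∂ₜ F (s, x) :=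
    (hasDerivAt_slice_left (differentiable_of_smooth hF) s x).deriv
  have hspace {F : ℝ × Space d → ℂ} (hF : ContDiff ℝ ∞ F) (i : Fin d) :
      dirDeriv (EuclideanSpace.single i 1) (fun y => F (s, y)) = fun y => ∂ₓ[i] F (s, y) :=
    dirDeriv_slice_right (differentiable_of_smooth hF) s _
  calc ∂ₜ (∂ₜ P) (s, x) = deriv (fun r => deriv (fun q => P (q, x)) r) s := by
        simp only [htime hP, htime (contDiff_dirDeriv hP _)]
    _ = ∑ i, dirDeriv (EuclideanSpace.single i 1)
          (dirDeriv (EuclideanSpace.single i 1) fun y => P (s, y)) x := h s x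
    _ = ∑ i, ∂ₓ[i] (∂ₓ[i] P) (s, x) := by
        simp only [hspace hP, hspace (contDiff_dirDeriv hP _)]

end Components

section EnergyNorm

variable {d : ℕ} {α : ℝ} {v₀ v₁ : Space d → ℂ} {P : ℝ × Space d → ℂ}

/-- The norm of `(f, g)` in `H¹ ⊕ L²`, with values in `[0, ∞]`. -/
noncomputable def energyNorm (f g : Space d → ℂ) : ENNReal :=
  eLpNorm f 2 volume + eLpNorm (fderiv ℝ f) 2 volume + eLpNorm g 2 volume

/-- A density `Q` such that `⟨x⟩^{-α} Q` dominates the data `(⟨x⟩^{-α} v₀, ⟨x⟩^{-α} v₁)` together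
with the gradient of the first component; the factor `1 + α` accounts for the derivative of the
weight. -/
noncomputable def dataDensity (α : ℝ) (v₀ v₁ : Space d → ℂ) (x : Space d) : ℝ :=
  (1 + α) * ‖v₀ x‖ + ‖fderiv ℝ v₀ x‖ + ‖v₁ x‖

lemma continuous_dataDensity (hv₀ : ContDiff ℝ ∞ v₀) (hv₁ : Continuous v₁) :
    Continuous (dataDensity α v₀ v₁) :=
  ((hv₀.continuous.norm.const_mul _).add (hv₀.continuous_fderiv (by simp)).norm).add hv₁.norm

lemma eLpNorm_dataDensity_le (hα : 0 ≤ α) (hv₀ : ContDiff ℝ ∞ v₀) (hv₁ : Continuous v₁) :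
    eLpNorm (dataDensity α v₀ v₁) 2 volume ≤ ENNReal.ofReal (1 + α) * energyNorm v₀ v₁ := by
  have hc₀ := hv₀.continuous
  have hc := hv₀.continuous_fderiv (by simp)
  have hone : 1 ≤ ENNReal.ofReal (1 + α) := ENNReal.one_le_ofReal.2 (by linarith)
  calc eLpNorm (dataDensity α v₀ v₁) 2 volume
      ≤ eLpNorm (fun x => (1 + α) * ‖v₀ x‖) 2 volume + eLpNorm (fun x => ‖fderiv ℝ v₀ x‖) 2 volume +
          eLpNorm (fun x => ‖v₁ x‖) 2 volume :=
        (eLpNorm_add_le (f := fun x => (1 + α) * ‖v₀ x‖ + ‖fderiv ℝ v₀ x‖) (by fun_prop)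
          (by fun_prop) one_le_two).trans
          (add_le_add_left (eLpNorm_add_le (by fun_prop) (by fun_prop) one_le_two) _)
    _ ≤ ENNReal.ofReal (1 + α) * eLpNorm v₀ 2 volume +
          ENNReal.ofReal (1 + α) * eLpNorm (fderiv ℝ v₀) 2 volume +
          ENNReal.ofReal (1 + α) * eLpNorm v₁ 2 volume := by
        rw [eLpNorm_norm, eLpNorm_norm]
        gcongr
        · refine eLpNorm_le_mul_eLpNorm_of_ae_le_mul (.of_forall fun x => ?_) 2
          rw [norm_mul, norm_norm, Real.norm_of_nonneg (by linarith)]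
        · exact le_mul_of_one_le_left' hone
        · exact le_mul_of_one_le_left' hone
    _ = ENNReal.ofReal (1 + α) * energyNorm v₀ v₁ := by rw [energyNorm, mul_add, mul_add]

lemma norm_dirDeriv_weight_smul_le (hα : 0 ≤ α) (hv₀ : ContDiff ℝ ∞ v₀) (v y : Space d) :
    ‖dirDeriv v (fun x => weight α ‖x‖ • v₀ x) y‖ ≤
      weight α ‖y‖ * (α * ‖v‖ * ‖v₀ y‖ + ‖fderiv ℝ v₀ y‖ * ‖v‖) := by
  have hw := weight_pos α ‖y‖
  have hweight := differentiable_of_smooth (contDiff_weight_norm (X := Space d) α) y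
  rw [dirDeriv, fderiv_fun_smul hweight (differentiable_of_smooth hv₀ y)]
  calc ‖weight α ‖y‖ • fderiv ℝ v₀ y v + dirDeriv v (fun x => weight α ‖x‖) y • v₀ y‖
      ≤ weight α ‖y‖ * ‖fderiv ℝ v₀ y v‖ + |dirDeriv v (fun x => weight α ‖x‖) y| * ‖v₀ y‖ := by
        refine (norm_add_le _ _).trans_eq ?_
        rw [norm_smul, norm_smul, Real.norm_of_nonneg hw.le, Real.norm_eq_abs]
    _ ≤ weight α ‖y‖ * (‖fderiv ℝ v₀ y‖ * ‖v‖) + α * ‖v‖ * weight α ‖y‖ * ‖v₀ y‖ := by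
        gcongr
        · exact (fderiv ℝ v₀ y).le_opNorm v
        · exact abs_dirDeriv_weight_norm_le hα v y
    _ = weight α ‖y‖ * (α * ‖v‖ * ‖v₀ y‖ + ‖fderiv ℝ v₀ y‖ * ‖v‖) := by ring

lemma isWeightedWave_clm_comp (hα : 0 ≤ α) (hP : ContDiff ℝ ∞ P) (hwave : IsWave P)
    (hv₀ : ContDiff ℝ ∞ v₀) (h₀ : ∀ x, P (0, x) = weight α ‖x‖ • v₀ x)
    (h₁ : ∀ x, ∂ₜ P (0, x) = weight α ‖x‖ • v₁ x) (hQ : MemLp (dataDensity α v₀ v₁) 2)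
    {l : ℂ →L[ℝ] ℝ} (hl : ‖l‖ ≤ 1) :
    IsWeightedWave α (dataDensity α v₀ v₁) fun p => l (P p) := by
  have hle {y : Space d} {z : ℂ} {c : ℝ} (hz : ‖z‖ ≤ weight α ‖y‖ * c)
      (hc : c ≤ dataDensity α v₀ v₁ y) : |l z| ≤ weight α ‖y‖ * dataDensity α v₀ v₁ y :=
    calc |l z| ≤ ‖z‖ := (l.le_of_opNorm_le hl z).trans_eq (one_mul _)
      _ ≤ weight α ‖y‖ * c := hz
      _ ≤ weight α ‖y‖ * dataDensity α v₀ v₁ y :=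
        mul_le_mul_of_nonneg_left hc (weight_pos _ _).le
  have hweight (y : Space d) (z : ℂ) : ‖weight α ‖y‖ • z‖ = weight α ‖y‖ * ‖z‖ := by
    rw [norm_smul, Real.norm_of_nonneg (weight_pos _ _).le]
  have hnn (y : Space d) : 0 ≤ α * ‖v₀ y‖ := mul_nonneg hα (norm_nonneg _)
  have hdiff := differentiable_of_smooth hP
  refine ⟨l.contDiff.comp hP, hwave.clm_comp hP l, hQ, fun y => ?_, fun y => ?_, fun i y => ?_⟩
  · refine hle (by rw [h₀, hweight]) ?_
    rw [dataDensity]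
    linarith [hnn y, norm_nonneg (fderiv ℝ v₀ y), norm_nonneg (v₁ y)]
  · simp only [dirDeriv_clm_comp hdiff]
    refine hle (by rw [h₁, hweight]) ?_
    rw [dataDensity]
    linarith [hnn y, norm_nonneg (fderiv ℝ v₀ y), norm_nonneg (v₀ y)]
  · simp only [dirDeriv_clm_comp hdiff]
    rw [← congrFun (dirDeriv_slice_right hdiff 0 (EuclideanSpace.single i 1)) y, funext h₀]
    refine hle (norm_dirDeriv_weight_smul_le hα hv₀ _ y) ?_
    rw [dataDensity, PiLp.norm_single, norm_one, mul_one, mul_one]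
    linarith [norm_nonneg (v₀ y), norm_nonneg (v₁ y)]

lemma energyNorm_weight_smul_le {B : ENNReal} {T : ℝ} (hα : 0 ≤ α) (hP : ContDiff ℝ ∞ P)
    (hvalue : ∀ l : ℂ →L[ℝ] ℝ, ‖l‖ ≤ 1 →
      eLpNorm (fun x => weight α ‖x‖ * l (P (T, x))) 2 volume ≤ B)
    (htime : ∀ l : ℂ →L[ℝ] ℝ, ‖l‖ ≤ 1 →
      eLpNorm (fun x => weight α ‖x‖ * l (∂ₜ P (T, x))) 2 volume ≤ B)
    (hspace : ∀ l : ℂ →L[ℝ] ℝ, ‖l‖ ≤ 1 → ∀ i,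
      eLpNorm (dirDeriv (EuclideanSpace.single i 1) fun x => weight α ‖x‖ * l (P (T, x))) 2 volume ≤
        ENNReal.ofReal (1 + α) * B) :
    energyNorm (fun x => weight α ‖x‖ • P (T, x)) (fun x => weight α ‖x‖ • ∂ₜ P (T, x)) ≤
      ENNReal.ofReal (4 + 2 * d * (1 + α)) * B := by
  have hκ := contDiff_weight_norm (X := Space d) α
  have hPT : ContDiff ℝ ∞ fun x => weight α ‖x‖ • P (T, x) := hκ.smul (hP.comp (by fun_prop))
  have hP' : Continuous fun x => weight α ‖x‖ • ∂ₜ P (T, x) :=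
    hκ.continuous.smul ((continuous_dirDeriv hP _).comp (by fun_prop))
  have hgrad (i : Fin d) :
      eLpNorm (dirDeriv (EuclideanSpace.single i 1) fun x => weight α ‖x‖ • P (T, x)) 2 volume ≤
        2 * (ENNReal.ofReal (1 + α) * B) :=
    eLpNorm_le_two_mul_of_forall_clm one_le_two
      (continuous_dirDeriv hPT _).aestronglyMeasurable fun l hl => by
        rw [← dirDeriv_clm_comp (differentiable_of_smooth hPT)]
        simpa only [map_smul, smul_eq_mul] using hspace l hl i
  calc _ ≤ 2 * B + ∑ _ : Fin d, 2 * (ENNReal.ofReal (1 + α) * B) + 2 * B := by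
        refine add_le_add (add_le_add ?_ ((eLpNorm_fderiv_le_sum one_le_two hPT).trans
          (Finset.sum_le_sum fun i _ => hgrad i))) ?_
        · refine eLpNorm_le_two_mul_of_forall_clm one_le_two
            hPT.continuous.aestronglyMeasurable fun l hl => ?_
          simpa only [map_smul, smul_eq_mul] using hvalue l hl
        · refine eLpNorm_le_two_mul_of_forall_clm one_le_two
            hP'.aestronglyMeasurable fun l hl => ?_
          simpa only [map_smul, smul_eq_mul] using htime l hl
    _ = (4 + 2 * d * ENNReal.ofReal (1 + α)) * B := by
        rw [Finset.sum_const, Finset.card_univ, Fintype.card_fin, nsmul_eq_mul]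
        ring
    _ = ENNReal.ofReal (4 + 2 * d * (1 + α)) * B := by
        rw [ENNReal.ofReal_add zero_le_four (by positivity), ENNReal.ofReal_mul (by positivity),
          ENNReal.ofReal_mul zero_le_two, ENNReal.ofReal_natCast, ENNReal.ofReal_ofNat,
          ENNReal.ofReal_ofNat]

theorem exists_forall_energyNorm_le (hd : 3 ≤ d) (hodd : Odd d) (hα : 1 ≤ α) :
    ∃ C > 0, ∀ (v₀ v₁ : Space d → ℂ) (P : ℝ × Space d → ℂ), ContDiff ℝ ∞ P → IsWave P →
      (∀ x, P (0, x) = weight α ‖x‖ • v₀ x) → (∀ x, ∂ₜ P (0, x) = weight α ‖x‖ • v₁ x) →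
      ∀ T, energyNorm (fun x => weight α ‖x‖ • P (T, x)) (fun x => weight α ‖x‖ • ∂ₜ P (T, x)) ≤
        ENNReal.ofReal (C * weight α T) * energyNorm v₀ v₁ := by
  obtain ⟨C, hC, hreal⟩ := IsWeightedWave.exists_forall_eLpNorm_le hd hodd hα
  have hα₀ : 0 ≤ α := by linarith
  refine ⟨(4 + 2 * d * (1 + α)) * C * (1 + α), by positivity,
    fun v₀ v₁ P hP hwave h₀ h₁ T => ?_⟩
  have hw := weight_pos α T
  have hv₀ : ContDiff ℝ ∞ v₀ := contDiff_of_contDiff_weight_smul (α := α) <| by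
    simpa only [← h₀, Function.comp_def] using hP.comp (contDiff_prodMk_right 0)
  have hv₁ : ContDiff ℝ ∞ v₁ := contDiff_of_contDiff_weight_smul (α := α) <| by
    simpa only [← h₁, Function.comp_def] using
      (contDiff_dirDeriv hP _).comp (contDiff_prodMk_right 0)
  have hdata := eLpNorm_dataDensity_le hα₀ hv₀ hv₁.continuous
  rcases eq_or_ne (energyNorm v₀ v₁) ⊤ with htop | htop
  · rw [htop, ENNReal.mul_top (ENNReal.ofReal_pos.2 (by positivity)).ne']
    exact le_top
  have hQ : MemLp (dataDensity α v₀ v₁) 2 :=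
    ⟨(continuous_dataDensity hv₀ hv₁.continuous).aestronglyMeasurable,
      hdata.trans_lt (ENNReal.mul_lt_top ENNReal.ofReal_lt_top htop.lt_top)⟩
  have hcomp (l : ℂ →L[ℝ] ℝ) (hl : ‖l‖ ≤ 1) :=
    hreal _ _ (isWeightedWave_clm_comp hα₀ hP hwave hv₀ h₀ h₁ hQ hl) T
  simp only [dirDeriv_clm_comp (differentiable_of_smooth hP),
    ENNReal.ofReal_mul (by linarith : 0 ≤ 1 + α)] at hcomp
  calc _ ≤ ENNReal.ofReal (4 + 2 * d * (1 + α)) *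
          ENNReal.ofReal (C * weight α T * l2norm (dataDensity α v₀ v₁)) :=
        energyNorm_weight_smul_le hα₀ hP (fun l hl => (hcomp l hl).1) (fun l hl => (hcomp l hl).2.1)
          fun l hl => (hcomp l hl).2.2
    _ ≤ ENNReal.ofReal (4 + 2 * d * (1 + α)) *
          (ENNReal.ofReal (C * weight α T) * (ENNReal.ofReal (1 + α) * energyNorm v₀ v₁)) := by
        rw [ENNReal.ofReal_mul (by positivity), ofReal_l2norm hQ]
        gcongr
    _ = ENNReal.ofReal ((4 + 2 * d * (1 + α)) * C * (1 + α) * weight α T) * energyNorm v₀ v₁ := by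
        rw [← mul_assoc, ← mul_assoc, ← ENNReal.ofReal_mul (by positivity),
          ← ENNReal.ofReal_mul (by positivity)]
        ring_nf

end EnergyNorm

end FreeWave

open FreeWave in
theorem weighted_free_wave_group_decay_general
    (d : ℕ) (hd : 3 ≤ d) (hodd : Odd d) (α : ℝ) (hα : 1 ≤ α) :
    ∃ C > 0, ∀ t : ℝ,
      ∀ v₀ v₁ : EuclideanSpace ℝ (Fin d) → ℂ,
      ∀ u : ℝ → EuclideanSpace ℝ (Fin d) → ℂ,
        ContDiff ℝ (⊤ : ℕ∞) (fun p : ℝ × EuclideanSpace ℝ (Fin d) => u p.1 p.2) →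
        (∀ s : ℝ, ∀ x, deriv (fun r => deriv (fun q => u q x) r) s = lapD d (u s) x) →
        (∀ x, u 0 x = ((1 + ‖x‖ ^ 2) ^ (-α / 2) : ℝ) • v₀ x) →
        (∀ x, deriv (fun s => u s x) 0 = ((1 + ‖x‖ ^ 2) ^ (-α / 2) : ℝ) • v₁ x) →
        eLpNorm (fun x : EuclideanSpace ℝ (Fin d) =>
            ((1 + ‖x‖ ^ 2) ^ (-α / 2) : ℝ) • u t x) 2 volume +
          eLpNorm (fderiv ℝ (fun x : EuclideanSpace ℝ (Fin d) =>
            ((1 + ‖x‖ ^ 2) ^ (-α / 2) : ℝ) • u t x)) 2 volume +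
          eLpNorm (fun x : EuclideanSpace ℝ (Fin d) =>
            ((1 + ‖x‖ ^ 2) ^ (-α / 2) : ℝ) • deriv (fun s => u s x) t) 2 volume
        ≤ ENNReal.ofReal (C * (1 + t ^ 2) ^ (-α / 2)) *
            (eLpNorm v₀ 2 volume + eLpNorm (fderiv ℝ v₀) 2 volume +
              eLpNorm v₁ 2 volume) := by
  obtain ⟨C, hC, h⟩ := exists_forall_energyNorm_le hd hodd hα
  refine ⟨C, hC, fun t v₀ v₁ u hu hwave h₀ h₁ => ?_⟩
  have hderiv (s : ℝ) (x : EuclideanSpace ℝ (Fin d)) :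
      deriv (fun s => u s x) s = dirDeriv (1, 0) (fun p => u p.1 p.2) (s, x) :=
    (hasDerivAt_slice_left (differentiable_of_smooth hu) s x).deriv
  simp only [hderiv] at h₁ ⊢
  exact h v₀ v₁ _ hu (isWave_of_lapD hu hwave) h₀ h₁ t

/-- **Weighted decay of the free wave group in odd dimensions:**
`‖⟨x⟩^{-α} e^{-itG₀} ⟨x⟩^{-α}‖_{𝓛(H¹⊕L²)} ≤ C⟨t⟩^{-α}` for `α ≥ 1`, `d ≥ 3` odd.
Stated on solutions: if `u` solves the free wave equation with data
`(⟨x⟩^{-α}v₀, ⟨x⟩^{-α}v₁)` (so that `(u(t), ∂ₜu(t)) = e^{-itG₀}⟨x⟩^{-α}(v₀,v₁)`),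
then the `H¹⊕L²` norm of `(⟨x⟩^{-α}u(t), ⟨x⟩^{-α}∂ₜu(t))` is bounded by
`C⟨t⟩^{-α}` times the `H¹⊕L²` norm of `(v₀, v₁)`, with `C` independent of `t`. -/
theorem weighted_free_wave_group_decay
    (d : ℕ) (hd : 3 ≤ d) (hodd : Odd d) (α : ℝ) (hα : 1 ≤ α) :
    ∃ C > 0, ∀ t : ℝ,
      ∀ v₀ v₁ : SchwartzMap (EuclideanSpace ℝ (Fin d)) ℂ,
      ∀ u : ℝ → EuclideanSpace ℝ (Fin d) → ℂ,
        ContDiff ℝ (⊤ : ℕ∞) (fun p : ℝ × EuclideanSpace ℝ (Fin d) => u p.1 p.2) →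
        (∀ s : ℝ, ∀ x, deriv (fun r => deriv (fun q => u q x) r) s = lapD d (u s) x) →
        (∀ x, u 0 x = ((1 + ‖x‖ ^ 2) ^ (-α / 2) : ℝ) • v₀ x) →
        (∀ x, deriv (fun s => u s x) 0 = ((1 + ‖x‖ ^ 2) ^ (-α / 2) : ℝ) • v₁ x) →
        eLpNorm (fun x : EuclideanSpace ℝ (Fin d) =>
            ((1 + ‖x‖ ^ 2) ^ (-α / 2) : ℝ) • u t x) 2 volume +
          eLpNorm (fderiv ℝ (fun x : EuclideanSpace ℝ (Fin d) =>
            ((1 + ‖x‖ ^ 2) ^ (-α / 2) : ℝ) • u t x)) 2 volume +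
          eLpNorm (fun x : EuclideanSpace ℝ (Fin d) =>
            ((1 + ‖x‖ ^ 2) ^ (-α / 2) : ℝ) • deriv (fun s => u s x) t) 2 volume
        ≤ ENNReal.ofReal (C * (1 + t ^ 2) ^ (-α / 2)) *
            (eLpNorm (⇑v₀) 2 volume + eLpNorm (fderiv ℝ (⇑v₀)) 2 volume +
              eLpNorm (⇑v₁) 2 volume) := by
  obtain ⟨C, hC, h⟩ := weighted_free_wave_group_decay_general d hd hodd α hα
  exact ⟨C, hC, fun t v₀ v₁ => h t v₀ v₁⟩
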